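/- arXiv:1010.5341 — 2 statements merged into one kernel-verified Lean document; each statement's English description precedes it below -/
import Mathlib

section
/- Let F ∈ ℤ[X_1, X_2] be a polynomial of total degree d ≥ 1 that is irreducible in ℚ[X_1, X_2], and let ε > 0. Let P_1, P_2 be real numbers with P_1, P_2 ≥ 1, and let T be the maximum of P_1^{e_1}·P_2^{e_2} over all pairs of exponents (e_1, e_2) for which the monomial X_1^{e_1}X_2^{e_2} occurs in F with nonzero coefficient; assume T > 1. Then the number N(F; P_1, P_2) of integer points (x_1, x_2) ∈ ℤ² with F(x_1, x_2) = 0, |x_1| ≤ P_1 and |x_2| ≤ P_2 satisfies N(F; P_1, P_2) ≤ C · max{P_1, P_2}^ε · exp( (log P_1 · log P_2)/ log T ) for a constant C depending only on d and ε. -/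
/-!
The determinant method of Bombieri–Pila and Heath-Brown. Near a zero `z₀` of `F` which is
nonsingular modulo a prime `p`, Newton iteration writes the second coordinate of an integral zero
as a polynomial in the first one to high `p`-adic order. Evaluating the `s` monomials with exponents
in a set `E` at `s` zeros congruent to `z₀` therefore gives a determinant divisible by
`p ^ choose s 2`, as for a Vandermonde matrix. If `p` is so large that the determinant must vanish,
then a polynomial with exponents in `E` vanishes at all these zeros. Taking for `E` exponents of
monomials not divisible by the leading monomial `m` of `F` makes `F` not divide it, and
Bézout's inequality bounds the number of zeros in each residue class modulo `p`.

In the weights `a = log P₁ / log M`, `b = log P₂ / log M` with `M = max P₁ P₂`, the monomial `m` has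
the weight `log T / log M`, and for a large L-shaped `E` the condition on `p` becomes
`M ^ (a * b / (m₁ * a + m₂ * b) + ε) ≪ p`, where the power of `M` is
`M ^ ε * exp (log P₁ * log P₂ / log T)`.

By Siegel's lemma, `F` may be assumed to have coefficients bounded by a power of `M`, unless it has
boundedly many zeros. So the derivative of `F` at a nonsingular zero has boundedly many large prime
divisors, and boundedly many primes `p` suffice to treat all nonsingular zeros.
-/

namespace BombieriPila

open Finset MvPolynomial

section Exponents

/-- The finite set of exponents of the monomials of total degree at most `n`. -/
def exponentsOfDegreeLE (σ : Type*) [Fintype σ] [DecidableEq σ] (n : ℕ) : Finset (σ →₀ ℕ) :=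
  (range (n + 1)).biUnion (univ.finsuppAntidiag ·)

variable {σ : Type*} [Fintype σ] [DecidableEq σ]

@[simp]
theorem mem_exponentsOfDegreeLE {n : ℕ} {e : σ →₀ ℕ} :
    e ∈ exponentsOfDegreeLE σ n ↔ e.degree ≤ n := by
  simp [exponentsOfDegreeLE, Finsupp.degree_eq_sum]

theorem card_exponentsOfDegreeLE (n : ℕ) :
    #(exponentsOfDegreeLE σ n) = (n + Fintype.card σ).choose (Fintype.card σ) := by
  rw [exponentsOfDegreeLE, card_biUnion fun i _ j _ hij ↦ disjoint_left.mpr fun e hi hj ↦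
    hij ((mem_finsuppAntidiag.mp hi).1.symm.trans (mem_finsuppAntidiag.mp hj).1)]
  simp only [card_finsuppAntidiag_nat_eq_multichoose, card_univ, Nat.sum_range_multichoose]

theorem support_subset_exponentsOfDegreeLE_iff {R : Type*} [CommSemiring R]
    {F : MvPolynomial σ R} {n : ℕ} :
    F.support ⊆ exponentsOfDegreeLE σ n ↔ F.totalDegree ≤ n := by
  simp only [subset_iff, mem_exponentsOfDegreeLE]
  exact Finset.sup_le_iff.symm

end Exponents

theorem finrank_restrictTotalDegree {σ : Type*} [Fintype σ] (R : Type*) [CommRing R]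
    [Nontrivial R] (n : ℕ) :
    Module.finrank R (restrictTotalDegree σ R n) =
      (n + Fintype.card σ).choose (Fintype.card σ) := by
  classical
  have hset : {e : σ →₀ ℕ | (e.sum fun _ k ↦ k) ≤ n} = exponentsOfDegreeLE σ n :=
    Set.ext fun e ↦ by simp [Finsupp.sum_fintype, Finsupp.degree_eq_sum]
  rw [restrictTotalDegree, Module.finrank_eq_nat_card_basis (basisRestrictSupport R _), hset,
    ← card_exponentsOfDegreeLE]
  exact Nat.card_eq_finsetCard _

section Bezout

variable {σ : Type*}

theorem exists_eval_ne_zero_forall_eval_eq_zero {R : Type*} [CommRing R] [IsDomain R]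
    (Z : Finset (σ → R)) (z : σ → R) :
    ∃ L : MvPolynomial σ R, L.totalDegree ≤ #Z ∧ eval z L ≠ 0 ∧
      ∀ y ∈ Z, y ≠ z → eval y L = 0 := by
  classical
  induction Z using Finset.induction_on with
  | empty => exact ⟨1, by simp⟩
  | insert y Z hy ih =>
    obtain ⟨L, hdeg, hz, hL⟩ := ih
    by_cases hyz : y = z
    · exact ⟨L, hdeg.trans (card_le_card (subset_insert _ _)), hz, by grind⟩
    obtain ⟨i, hi⟩ := Function.ne_iff.mp hyz
    refine ⟨L * (X i - C (y i)), ?_, ?_, ?_⟩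
    · rw [card_insert_of_notMem hy]
      refine (totalDegree_mul _ _).trans (add_le_add hdeg ?_)
      exact (totalDegree_sub_C_le _ _).trans_eq (totalDegree_X i)
    · simpa [hz, sub_eq_zero] using hi.symm
    · intro w hw hwz
      rcases mem_insert.mp hw with rfl | hw
      · simp
      · simp [hL w hw hwz]

variable {K : Type*} [Field K]

theorem card_add_finrank_le_of_forall_eval_eq_zero [Finite σ] {Z : Finset (σ → K)} {n : ℕ}
    (hn : #Z ≤ n) {S : Submodule K (MvPolynomial σ K)} (hS : S ≤ restrictTotalDegree σ K n)
    (hSZ : ∀ G ∈ S, ∀ z ∈ Z, eval z G = 0) :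
    #Z + Module.finrank K S ≤ Module.finrank K (restrictTotalDegree σ K n) := by
  let evalZ : restrictTotalDegree σ K n →ₗ[K] Z → K :=
    LinearMap.pi fun z ↦ (aeval z.1).toLinearMap.domRestrict _
  have evalZ_apply (G z) : evalZ G z = eval z.1 G.1 := by simp [evalZ, aeval_eq_eval]
  have hsurj : Function.Surjective evalZ := fun f ↦ by
    choose L hdeg hz hL using exists_eval_ne_zero_forall_eval_eq_zero Z
    refine ⟨∑ z : Z, (f z / eval z.1 (L z)) •
      ⟨L z, (mem_restrictTotalDegree _ _ _).mpr ((hdeg z).trans hn)⟩, ?_⟩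
    ext y
    rw [map_sum, Finset.sum_apply, sum_eq_single y]
    · simp [evalZ_apply, hz]
    · intro z _ hzy
      simp [evalZ_apply, hL z y y.2 fun h ↦ hzy (Subtype.ext h.symm)]
    · simp
  have hker : S.comap (restrictTotalDegree σ K n).subtype ≤ LinearMap.ker evalZ := fun G hG ↦
    LinearMap.mem_ker.mpr (funext fun z ↦ (evalZ_apply G z).trans (hSZ G.1 hG z.1 z.2))
  have hrank := LinearMap.finrank_range_add_finrank_ker evalZ
  rw [LinearMap.range_eq_top.mpr hsurj, finrank_top, Module.finrank_fintype_fun_eq_card,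
    Fintype.card_coe] at hrank
  have := Submodule.finrank_mono hker
  rw [(Submodule.comapSubtypeEquivOfLe hS).finrank_eq] at this
  omega

theorem finrank_map_mulLeft {A : Type*} [CommRing A] [IsDomain A] [Algebra K A] {F : A}
    (hF : F ≠ 0) (V : Submodule K A) :
    Module.finrank K (V.map (LinearMap.mulLeft K F)) = Module.finrank K V :=
  (V.equivMapOfInjective _ (mul_right_injective₀ hF)).finrank_eq.symm

theorem map_mulLeft_restrictTotalDegree_le (F : MvPolynomial σ K) (n : ℕ) :
    (restrictTotalDegree σ K n).map (LinearMap.mulLeft K F) ≤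
      restrictTotalDegree σ K (F.totalDegree + n) := by
  rintro _ ⟨H, hH, rfl⟩
  rw [SetLike.mem_coe, mem_restrictTotalDegree] at hH
  exact (mem_restrictTotalDegree _ _ _).mpr ((totalDegree_mul F H).trans (by gcongr))

theorem map_mulLeft_inf_map_mulLeft_le {F G : MvPolynomial σ K} (hF : Prime F) (hFG : ¬ F ∣ G)
    (n m : ℕ) :
    (restrictTotalDegree σ K m).map (LinearMap.mulLeft K F) ⊓
        (restrictTotalDegree σ K (F.totalDegree + n)).map (LinearMap.mulLeft K G) ≤
      (restrictTotalDegree σ K n).map (LinearMap.mulLeft K (F * G)) := by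
  rintro _ ⟨⟨A, -, rfl⟩, B, hB, hAB⟩
  obtain ⟨W, rfl⟩ := (hF.dvd_or_dvd ⟨A, hAB⟩).resolve_left hFG
  refine ⟨W, ?_, ?_⟩
  · rcases eq_or_ne W 0 with rfl | hW
    · simp
    rw [SetLike.mem_coe, mem_restrictTotalDegree, totalDegree_mul_of_isDomain hF.ne_zero hW] at hB
    exact (mem_restrictTotalDegree _ _ _).mpr (by omega)
  · rw [← hAB, LinearMap.mulLeft_apply, LinearMap.mulLeft_apply]
    ring

theorem card_le_totalDegree_mul_totalDegree {F G : MvPolynomial (Fin 2) K} (hF : Irreducible F)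
    (hFG : ¬ F ∣ G) {Z : Finset (Fin 2 → K)} (hZF : ∀ z ∈ Z, eval z F = 0)
    (hZG : ∀ z ∈ Z, eval z G = 0) : #Z ≤ F.totalDegree * G.totalDegree := by
  set d := F.totalDegree
  set g := G.totalDegree
  have hG : G ≠ 0 := fun h ↦ hFG (h ▸ dvd_zero F)
  let V := restrictTotalDegree (Fin 2) K
  let S := (V (g + #Z)).map (LinearMap.mulLeft K F)
  let T := (V (d + #Z)).map (LinearMap.mulLeft K G)
  have hST : S ⊔ T ≤ V (d + (g + #Z)) := sup_le (map_mulLeft_restrictTotalDegree_le F _)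
    ((map_mulLeft_restrictTotalDegree_le G _).trans_eq (by rw [add_left_comm]))
  have hvanish : ∀ H ∈ S ⊔ T, ∀ z ∈ Z, eval z H = 0 := fun H hH z hz ↦ by
    obtain ⟨_, ⟨A, -, rfl⟩, _, ⟨B, -, rfl⟩, rfl⟩ := Submodule.mem_sup.mp hH
    simp [hZF z hz, hZG z hz]
  have hsup := card_add_finrank_le_of_forall_eval_eq_zero (by omega) hST hvanish
  have hinf := Submodule.finrank_mono (map_mulLeft_inf_map_mulLeft_le hF.prime hFG #Z (g + #Z))
  have hsum := Submodule.finrank_sup_add_finrank_inf_eq S T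
  have hS : Module.finrank K S = _ := finrank_map_mulLeft hF.ne_zero _
  have hT : Module.finrank K T = _ := finrank_map_mulLeft hG _
  rw [finrank_map_mulLeft (mul_ne_zero hF.ne_zero hG)] at hinf
  simp only [V, finrank_restrictTotalDegree, Fintype.card_fin] at hsup hinf hS hT
  have htwo (n : ℕ) : (n + 2).choose 2 * 2 = (n + 1) * (n + 2) := by
    rw [Nat.choose_two_right, Nat.div_mul_cancel (Nat.even_mul_pred_self _).two_dvd]
    simp [mul_comm]
  have := htwo #Z
  have := htwo (g + #Z)
  have := htwo (d + #Z)
  have := htwo (d + (g + #Z))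
  have : Module.finrank K ↥(S ⊓ T) ≤ (#Z + 2).choose 2 := hinf
  nlinarith

theorem card_le_totalDegree_mul_totalDegree_of_map {R : Type*} [CommSemiring R] {f : R →+* K}
    (hf : Function.Injective f) {F : MvPolynomial (Fin 2) R} {G : MvPolynomial (Fin 2) K}
    (hF : Irreducible (map f F)) (hFG : ¬ map f F ∣ G) {Z : Finset (Fin 2 → R)}
    (hZF : ∀ z ∈ Z, eval z F = 0) (hZG : ∀ z ∈ Z, eval (f ∘ z) G = 0) :
    #Z ≤ F.totalDegree * G.totalDegree := by
  classical
  have h := card_le_totalDegree_mul_totalDegree hF hFG (Z := Z.image (f ∘ ·))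
    (by simpa only [forall_mem_image, ← map_eval] using fun z hz ↦ by rw [hZF z hz, map_zero])
    (by simpa using hZG)
  rw [card_image_of_injective _ (hf.comp_left)] at h
  exact h.trans (Nat.mul_le_mul_right _ (sup_mono (support_map_subset _ _)))

end Bezout

section Determinants

theorem dvd_det_sub_det {ι R : Type*} [Fintype ι] [DecidableEq ι] [CommRing R] {a : R}
    {M N : Matrix ι ι R} (h : ∀ i j, a ∣ M i j - N i j) : a ∣ M.det - N.det := by
  simp only [← Ideal.mem_span_singleton, ← Ideal.Quotient.eq, RingHom.map_det] at h ⊢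
  congr 1
  ext i j
  exact h i j

theorem pow_dvd_det_vandermonde {R : Type*} [CommRing R] {p : R} {s : ℕ} {t : Fin s → R}
    (ht : ∀ i j, p ∣ t i - t j) : p ^ s.choose 2 ∣ (Matrix.vandermonde t).det := by
  have hexp : p ^ s.choose 2 = ∏ i : Fin s, ∏ _j ∈ Ioi i, p := by
    simp only [prod_const, prod_pow_eq_pow_sum, Fin.card_Ioi]
    rw [Nat.choose_two_right, ← sum_range_id, ← sum_range_reflect, sum_range]
  rw [Matrix.det_vandermonde, hexp]
  exact prod_dvd_prod_of_dvd _ _ fun i _ ↦ prod_dvd_prod_of_dvd _ _ fun j _ ↦ ht j i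

theorem of_eval_eq_vandermonde_mul_coeff_modByMonic {R : Type*} [CommRing R] [Nontrivial R] {s : ℕ}
    (g : Fin s → Polynomial R) (t : Fin s → R) :
    (Matrix.of fun i j ↦ (g j).eval (t i)) = Matrix.vandermonde t *
      Matrix.of fun k j ↦ (g j %ₘ ∏ i, (Polynomial.X - Polynomial.C (t i))).coeff (k : Fin s) := by
  set Ω : Polynomial R := ∏ i, (Polynomial.X - Polynomial.C (t i))
  have hΩ : Ω.Monic := Polynomial.monic_prod_X_sub_C _ _
  have hdeg : Ω.degree = s := by
    rw [Polynomial.degree_eq_natDegree hΩ.ne_zero,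
      Polynomial.natDegree_prod_of_monic _ _ fun i _ ↦ Polynomial.monic_X_sub_C _]
    simp
  ext i j
  have hroot : Ω.eval (t i) = 0 := by
    rw [Polynomial.eval_prod, prod_eq_zero (mem_univ i) (by simp)]
  calc (g j).eval (t i) = (g j %ₘ Ω).eval (t i) := by
        conv_lhs => rw [← Polynomial.modByMonic_add_div (g j) Ω]
        simp [hroot]
    _ = _ := by
        have hlt : g j %ₘ Ω ∈ Polynomial.degreeLT R s :=
          Polynomial.mem_degreeLT.mpr (hdeg ▸ Polynomial.degree_modByMonic_lt (g j) hΩ)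
        rw [Polynomial.eval_eq_sum_degreeLTEquiv hlt]
        simp [Matrix.mul_apply, mul_comm, Polynomial.degreeLTEquiv]

theorem pow_dvd_det_eval {R : Type*} [CommRing R] {p : R} {s : ℕ} (g : Fin s → Polynomial R)
    {t : Fin s → R} (ht : ∀ i j, p ∣ t i - t j) :
    p ^ s.choose 2 ∣ (Matrix.of fun i j ↦ (g j).eval (t i)).det := by
  nontriviality R
  rw [of_eval_eq_vandermonde_mul_coeff_modByMonic, Matrix.det_mul]
  exact (pow_dvd_det_vandermonde ht).mul_right _

theorem abs_det_le_factorial_mul_prod {ι R : Type*} [Fintype ι] [DecidableEq ι] [CommRing R]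
    [LinearOrder R] [IsStrictOrderedRing R] {M : Matrix ι ι R} {w : ι → R}
    (h : ∀ i j, |M i j| ≤ w j) : |M.det| ≤ (Fintype.card ι).factorial * ∏ j, w j := by
  rw [← Matrix.det_transpose, Matrix.det_apply]
  have hterm (τ : Equiv.Perm ι) :
      |Equiv.Perm.sign τ • ∏ i, M.transpose (τ i) i| ≤ ∏ j, w j := by
    rw [Units.smul_def, zsmul_eq_mul, abs_mul, abs_prod, ← Equiv.prod_comp τ w]
    rcases Int.units_eq_one_or (Equiv.Perm.sign τ) with hτ | hτ <;>
      simpa [hτ] using prod_le_prod (fun _ _ ↦ abs_nonneg _) fun i _ ↦ h i (τ i)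
  refine (abs_sum_le_sum_abs _ _).trans ((sum_le_card_nsmul _ _ _ fun τ _ ↦ hterm τ).trans_eq ?_)
  rw [card_univ, Fintype.card_perm, nsmul_eq_mul]

theorem exists_linearIndependent_of_span_eq_top {ι K : Type*} [Finite ι] [Field K]
    {S : Set (ι → K)} (hS : Submodule.span K S = ⊤) :
    ∃ M : Matrix ι ι K, (∀ i, M i ∈ S) ∧ LinearIndependent K M.row := by
  obtain ⟨b, hbS, hb_span, hb⟩ := exists_linearIndependent K S
  let B := Module.Basis.mk hb (by rw [Subtype.range_coe, hb_span, hS])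
  let e := B.indexEquiv (Pi.basisFun K ι)
  exact ⟨fun i ↦ (e.symm i).1, fun i ↦ hbS (e.symm i).2, hb.comp _ e.symm.injective⟩

theorem exists_dotProduct_eq_zero_of_forall_det_eq_zero {ι K : Type*} [Fintype ι] [DecidableEq ι]
    [Field K] {S : Set (ι → K)}
    (hS : ∀ M : Matrix ι ι K, (∀ i, M i ∈ S) → M.det = 0) :
    ∃ c : ι → K, c ≠ 0 ∧ ∀ v ∈ S, c ⬝ᵥ v = 0 := by
  have hspan : Submodule.span K S ≠ ⊤ := fun htop ↦ by
    obtain ⟨M, hMS, hM⟩ := exists_linearIndependent_of_span_eq_top htop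
    exact not_isUnit_zero (hS M hMS ▸ (Matrix.isUnit_iff_isUnit_det M).mp
      (Matrix.linearIndependent_rows_iff_isUnit.mp hM))
  obtain ⟨f, hf, hSf⟩ := Submodule.exists_le_ker_of_lt_top _ hspan.lt_top
  obtain ⟨c, rfl⟩ := (dotProductEquiv K ι).surjective f
  exact ⟨c, by simpa using hf, fun v hv ↦ hSf (Submodule.subset_span hv)⟩

end Determinants

section Lifting

theorem exists_eval_add_single_eq {σ R : Type*} [DecidableEq σ] [CommRing R]
    (F : MvPolynomial σ R) (z : σ → R) (i : σ) (h : R) :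
    ∃ K, eval (z + Pi.single i h) F = eval z F + h * eval z (pderiv i F) + h ^ 2 * K := by
  induction F using MvPolynomial.induction_on with
  | C a => exact ⟨0, by simp⟩
  | add F G hF hG =>
    obtain ⟨K, hK⟩ := hF
    obtain ⟨L, hL⟩ := hG
    exact ⟨K + L, by simp only [map_add, hK, hL]; ring⟩
  | mul_X F j hF =>
    obtain ⟨K, hK⟩ := hF
    rcases eq_or_ne j i with rfl | hji
    · refine ⟨eval z (pderiv j F) + K * z j + h * K, ?_⟩
      simp [hK]
      ring
    · refine ⟨K * z j, ?_⟩
      simp [hK, hji]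
      ring

theorem dvd_eval_sub_eval {σ R : Type*} [CommRing R] {p : R} {z w : σ → R}
    (h : ∀ i, p ∣ z i - w i) (F : MvPolynomial σ R) : p ∣ eval z F - eval w F := by
  simp only [← Ideal.mem_span_singleton, ← Ideal.Quotient.eq] at h ⊢
  rw [map_eval, map_eval]
  exact congrArg (eval · _) (funext h)

-- Newton iteration: each step replaces `f` by `f - c * F(X, f)`.
theorem exists_polynomial_forall_pow_dvd {R : Type*} [CommRing R] {F : MvPolynomial (Fin 2) R}
    {p : R} {z₀ : Fin 2 → R} (hp : IsCoprime p (eval z₀ (pderiv 1 F))) (k : ℕ) :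
    ∃ f : Polynomial R, ∀ z : Fin 2 → R, eval z F = 0 → (∀ i, p ∣ z i - z₀ i) →
      p ^ (k + 1) ∣ f.eval (z 0) - z 1 := by
  obtain ⟨a, c, hac⟩ := hp
  induction k with
  | zero => exact ⟨Polynomial.C (z₀ 1), fun z _ hz ↦ by simpa [dvd_sub_comm] using hz 1⟩
  | succ k ih =>
    obtain ⟨f, hf⟩ := ih
    refine ⟨f - Polynomial.C c * aeval ![Polynomial.X, f] F, fun z hzF hz ↦ ?_⟩
    set h := f.eval (z 0) - z 1 with hh
    have hshift : ![z 0, f.eval (z 0)] = z + Pi.single 1 h := by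
      ext i
      fin_cases i <;> simp [hh]
    have heval : (aeval ![Polynomial.X, f] F).eval (z 0) = eval (z + Pi.single 1 h) F := by
      rw [← hshift, aeval_def, ← Polynomial.coe_evalRingHom, eval₂_comp_left, ← eval₂_id]
      congr 1
      · ext; simp
      · ext i
        fin_cases i <;> simp
    obtain ⟨K, hK⟩ := exists_eval_add_single_eq F z 1 h
    obtain ⟨q, hq⟩ := hf z hzF hz
    have hunit : p ∣ 1 - c * eval z (pderiv 1 F) - c * h * K := by
      obtain ⟨b, hb⟩ := dvd_eval_sub_eval hz (pderiv 1 F)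
      exact ⟨a - c * b - c * p ^ k * q * K, by
        linear_combination -hac - c * hb - c * K * (hh.trans hq)⟩
    have hnew : (f - Polynomial.C c * aeval ![Polynomial.X, f] F).eval (z 0) - z 1 =
        h * (1 - c * eval z (pderiv 1 F) - c * h * K) := by
      rw [Polynomial.eval_sub, Polynomial.eval_mul, Polynomial.eval_C, heval, hK, hzF, hh]
      ring
    rw [hnew, pow_succ]
    exact mul_dvd_mul ⟨q, hq⟩ hunit

-- On the residue class of a nonsingular point the second coordinate is, up to high order,
-- a polynomial in the first one, so every monomial is too.
theorem pow_dvd_det_monomials {R ι : Type*} [CommRing R] [Fintype ι] [DecidableEq ι]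
    {F : MvPolynomial (Fin 2) R} {p : R} {z₀ : Fin 2 → R}
    (hp : IsCoprime p (eval z₀ (pderiv 1 F))) (e : ι → Fin 2 →₀ ℕ) {z : ι → Fin 2 → R}
    (hzF : ∀ i, eval (z i) F = 0) (hz : ∀ i j, p ∣ z i j - z₀ j) :
    p ^ (Fintype.card ι).choose 2 ∣ (Matrix.of fun i j ↦ ∏ l, z i l ^ e j l).det := by
  let φ := Fintype.equivFin ι
  set k := (Fintype.card ι).choose 2
  obtain ⟨f, hf⟩ := exists_polynomial_forall_pow_dvd hp k
  let g (j : Fin (Fintype.card ι)) : Polynomial R := ∏ l, ![Polynomial.X, f] l ^ e (φ.symm j) l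
  have hg : p ^ k ∣ (Matrix.of fun i j ↦ (g j).eval (z (φ.symm i) 0)).det :=
    pow_dvd_det_eval g fun i j ↦ by simpa using dvd_sub (hz (φ.symm i) 0) (hz (φ.symm j) 0)
  rw [← Matrix.det_submatrix_equiv_self φ.symm]
  refine (dvd_iff_dvd_of_dvd_sub (dvd_det_sub_det fun i j ↦ ?_)).mp hg
  have hfz : p ^ k ∣ f.eval (z (φ.symm i) 0) - z (φ.symm i) 1 :=
    (pow_dvd_pow p k.le_succ).trans (hf _ (hzF _) (hz _))
  simpa [g, Fin.prod_univ_two, Polynomial.eval_mul, ← mul_sub] using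
    (hfz.trans (sub_dvd_pow_sub_pow _ _ _)).mul_left _

end Lifting

section MonomialVector

theorem exists_support_subset_coeff_eq {σ R : Type*} [CommSemiring R]
    {E : Finset (σ →₀ ℕ)} (c : E → R) :
    ∃ F : MvPolynomial σ R, F.support ⊆ E ∧ ∀ e : E, coeff e.1 F = c e := by
  classical
  refine ⟨∑ e : E, monomial e.1 (c e), ?_, fun e ↦ ?_⟩
  · exact MvPolynomial.support_sum.trans (biUnion_subset.mpr fun e _ ↦
      support_monomial_subset.trans (singleton_subset_iff.mpr e.2))
  · simp [coeff_sum, coeff_monomial]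

variable {σ R : Type*} [Fintype σ]

/-- The vector of the values at `z` of the monomials with exponents in `E`. A linear relation
between its entries is a polynomial with support in `E` that vanishes at `z`. -/
def monomialVector [CommMonoid R] (E : Finset (σ →₀ ℕ)) (z : σ → R) : E → R :=
  fun e ↦ ∏ i, z i ^ e.1 i

theorem map_monomialVector {S : Type*} [CommSemiring R] [CommSemiring S] (f : R →+* S)
    (E : Finset (σ →₀ ℕ)) (z : σ → R) : monomialVector E (f ∘ z) = f ∘ monomialVector E z := by
  ext e
  simp [monomialVector]

theorem abs_monomialVector_le [CommRing R] [LinearOrder R] [IsStrictOrderedRing R] {z P : σ → R}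
    (hz : ∀ i, |z i| ≤ P i) (E : Finset (σ →₀ ℕ)) (e : E) :
    |monomialVector E z e| ≤ monomialVector E P e := by
  simp only [monomialVector, abs_prod, abs_pow]
  gcongr with i
  exact hz i

theorem eval_eq_dotProduct_monomialVector [CommSemiring R] {E : Finset (σ →₀ ℕ)}
    {F : MvPolynomial σ R} (hF : F.support ⊆ E) (z : σ → R) :
    eval z F = (fun e : E ↦ coeff e.1 F) ⬝ᵥ monomialVector E z := by
  rw [eval_eq', sum_subset hF fun e _ he ↦ by rw [notMem_support_iff.mp he, zero_mul],
    ← sum_coe_sort]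
  rfl

theorem exists_support_subset_eval_eq_dotProduct [CommSemiring R] {E : Finset (σ →₀ ℕ)}
    {c : E → R} (hc : c ≠ 0) :
    ∃ F : MvPolynomial σ R, F ≠ 0 ∧ F.support ⊆ E ∧ (∀ e : E, coeff e.1 F = c e) ∧
      ∀ z, eval z F = c ⬝ᵥ monomialVector E z := by
  obtain ⟨F, hFE, hFc⟩ := exists_support_subset_coeff_eq c
  refine ⟨F, ?_, hFE, hFc, fun z ↦ ?_⟩
  · rintro rfl
    exact hc (funext fun e ↦ by simp [← hFc])
  · rw [eval_eq_dotProduct_monomialVector hFE, funext hFc]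

end MonomialVector

section AuxiliaryPolynomial

variable {F : MvPolynomial (Fin 2) ℤ} {p : ℕ} {z₀ : Fin 2 → ℤ} {E : Finset (Fin 2 →₀ ℕ)}
  {P : Fin 2 → ℝ} {Z : Finset (Fin 2 → ℤ)}

theorem det_monomialVector_eq_zero (hp : IsCoprime (p : ℤ) (eval z₀ (pderiv 1 F)))
    (hE : (#E).factorial * ∏ e ∈ E, ∏ i, P i ^ e i < (p : ℝ) ^ (#E).choose 2)
    (hZF : ∀ z ∈ Z, eval z F = 0) (hZp : ∀ z ∈ Z, ∀ i, (p : ℤ) ∣ z i - z₀ i)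
    (hZP : ∀ z ∈ Z, ∀ i, |(z i : ℝ)| ≤ P i) {z : E → Fin 2 → ℤ} (hz : ∀ e, z e ∈ Z) :
    (Matrix.of fun e ↦ monomialVector E (z e)).det = 0 := by
  set M : Matrix E E ℤ := Matrix.of fun e ↦ monomialVector E (z e)
  have hdvd : (p : ℤ) ^ (#E).choose 2 ∣ M.det := by
    have := pow_dvd_det_monomials hp (fun e : E ↦ e.1) (fun e ↦ hZF _ (hz e))
      fun e ↦ hZp _ (hz e)
    rwa [Fintype.card_coe] at this
  have hbound : |(M.det : ℝ)| ≤ (#E).factorial * ∏ e ∈ E, ∏ i, P i ^ e i := by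
    rw [← eq_intCast (Int.castRingHom ℝ), RingHom.map_det, ← prod_coe_sort]
    refine (abs_det_le_factorial_mul_prod (w := monomialVector E P) fun e e' ↦ ?_).trans_eq ?_
    · have := abs_monomialVector_le (z := Int.castRingHom ℝ ∘ z e) (hZP _ (hz e)) E e'
      rwa [map_monomialVector] at this
    · rw [Fintype.card_coe]
      rfl
  refine Int.eq_zero_of_abs_lt_dvd hdvd ?_
  exact_mod_cast hbound.trans_lt hE

theorem exists_eval_eq_zero_of_residueClass (hp : IsCoprime (p : ℤ) (eval z₀ (pderiv 1 F)))
    (hE : (#E).factorial * ∏ e ∈ E, ∏ i, P i ^ e i < (p : ℝ) ^ (#E).choose 2)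
    (hZF : ∀ z ∈ Z, eval z F = 0) (hZp : ∀ z ∈ Z, ∀ i, (p : ℤ) ∣ z i - z₀ i)
    (hZP : ∀ z ∈ Z, ∀ i, |(z i : ℝ)| ≤ P i) :
    ∃ G : MvPolynomial (Fin 2) ℚ, G ≠ 0 ∧ G.support ⊆ E ∧
      ∀ z ∈ Z, eval (Int.castRingHom ℚ ∘ z) G = 0 := by
  obtain ⟨c, hc, hcZ⟩ := exists_dotProduct_eq_zero_of_forall_det_eq_zero
    (S := (fun z ↦ monomialVector E (Int.castRingHom ℚ ∘ z)) '' Z) fun M hM ↦ by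
      choose z hz hzM using hM
      have hMz : M = (Int.castRingHom ℚ).mapMatrix (Matrix.of fun e ↦ monomialVector E (z e)) := by
        ext e e'
        simp only [← hzM, map_monomialVector]
        rfl
      rw [hMz, ← RingHom.map_det, det_monomialVector_eq_zero hp hE hZF hZp hZP hz, map_zero]
  obtain ⟨G, hG, hGE, -, hGc⟩ := exists_support_subset_eval_eq_dotProduct hc
  exact ⟨G, hG, hGE, fun z hz ↦ (hGc _).trans (hcZ _ ⟨z, hz, rfl⟩)⟩

end AuxiliaryPolynomial

section LeadingMonomial

-- The product of the terms of largest weight survives in the product of the polynomials.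
theorem exists_le_mem_support_of_dvd {σ R Γ : Type*} [CommRing R] [NoZeroDivisors R]
    [AddCommMonoid Γ] [LinearOrder Γ] [IsOrderedCancelAddMonoid Γ] {w : (σ →₀ ℕ) →+ Γ}
    (hw : Function.Injective w) {F G : MvPolynomial σ R} {m : σ →₀ ℕ} (hm : m ∈ F.support)
    (hmax : ∀ e ∈ F.support, w e ≤ w m) (hG : G ≠ 0) (hFG : F ∣ G) :
    ∃ e ∈ G.support, m ≤ e := by
  classical
  obtain ⟨H, rfl⟩ := hFG
  obtain ⟨n, hn, hn_max⟩ := H.support.exists_max_image w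
    (support_nonempty.mpr (right_ne_zero_of_mul hG))
  refine ⟨m + n, ?_, le_self_add⟩
  rw [mem_support_iff, coeff_mul, sum_eq_single (m, n)]
  · exact mul_ne_zero (mem_support_iff.mp hm) (mem_support_iff.mp hn)
  · rintro ⟨x, y⟩ hxy hne
    rw [HasAntidiagonal.mem_antidiagonal] at hxy
    by_contra h0
    have hx := hmax x (mem_support_iff.mpr (left_ne_zero_of_mul h0))
    have hy := hn_max y (mem_support_iff.mpr (right_ne_zero_of_mul h0))
    have hsum : w x + w y = w m + w n := by rw [← map_add, ← map_add, hxy]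
    obtain ⟨hxm, hyn⟩ := (add_eq_add_iff_eq_and_eq hx hy).mp hsum
    exact hne (Prod.ext (hw hxm) (hw hyn))
  · exact fun h ↦ (h (HasAntidiagonal.mem_antidiagonal.mpr rfl)).elim

theorem exists_max_weight_forall_dvd {σ R : Type*} [LinearOrder σ] [CommRing R]
    [NoZeroDivisors R] (w : σ → ℝ) {F : MvPolynomial σ R} (hF : F ≠ 0) :
    ∃ m ∈ F.support, (∀ e ∈ F.support, Finsupp.weight w e ≤ Finsupp.weight w m) ∧
      ∀ G, G ≠ 0 → F ∣ G → ∃ e ∈ G.support, m ≤ e := by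
  let ω : (σ →₀ ℕ) →+ ℝ ×ₗ Lex (σ →₀ ℕ) :=
    { toFun := fun e ↦ toLex (Finsupp.weight w e, toLex e)
      map_zero' := by simp
      map_add' := fun e f ↦ by simp [← toLex_add] }
  have hω : Function.Injective ω := fun e f h ↦ by
    simpa using congrArg Prod.snd (toLex_inj.mp h)
  obtain ⟨m, hm, hmax⟩ := F.support.exists_max_image ω (support_nonempty.mpr hF)
  refine ⟨m, hm, fun e he ↦ ?_, fun G ↦ exists_le_mem_support_of_dvd hω hm hmax⟩
  exact ((Prod.Lex.le_iff'.mp (hmax e he)).1 :)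

end LeadingMonomial

section ResidueClasses

theorem card_zeros_le_totalDegree_mul_card_pow {K : Type*} [Field K] [Fintype K] [DecidableEq K]
    {n : ℕ} {F : MvPolynomial (Fin (n + 1)) K} (hF : F ≠ 0) :
    #{z : Fin (n + 1) → K | eval z F = 0} ≤ F.totalDegree * Fintype.card K ^ n := by
  have hK : 0 < Fintype.card K := Fintype.card_pos
  have h := schwartz_zippel_totalDegree hF (univ : Finset K)
  rw [Fintype.piFinset_univ, card_univ, div_le_div_iff₀ (by positivity) (by positivity)] at h
  refine Nat.le_of_mul_le_mul_right (c := Fintype.card K) ?_ hK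
  rw [mul_assoc, ← pow_succ]
  exact_mod_cast h

variable {F : MvPolynomial (Fin 2) ℤ} {p : ℕ} {Z : Finset (Fin 2 → ℤ)} {B : ℕ}

theorem card_le_mul_of_card_residueClass_le [Fact p.Prime]
    (hF : map (Int.castRingHom (ZMod p)) F ≠ 0) (hZF : ∀ z ∈ Z, eval z F = 0)
    (hB : ∀ z₀ ∈ Z, #{z ∈ Z | ∀ i, (p : ℤ) ∣ z i - z₀ i} ≤ B) :
    #Z ≤ B * (F.totalDegree * p) := by
  have hzeros : Z.image (Int.castRingHom (ZMod p) ∘ ·) ⊆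
      ({z | eval z (map (Int.castRingHom (ZMod p)) F) = 0} : Finset _) := by
    refine image_subset_iff.mpr fun z hz ↦ ?_
    rw [mem_filter_univ, ← map_eval, hZF z hz, map_zero]
  have hfiber : ∀ y ∈ Z.image (Int.castRingHom (ZMod p) ∘ ·),
      #{z ∈ Z | Int.castRingHom (ZMod p) ∘ z = y} ≤ B := by
    refine forall_mem_image.mpr fun z₀ hz₀ ↦ (card_le_card ?_).trans (hB z₀ hz₀)
    refine monotone_filter_right _ fun z _ hz i ↦ ?_
    rw [← ZMod.intCast_zmod_eq_zero_iff_dvd, Int.cast_sub, sub_eq_zero]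
    exact congrFun hz i
  calc #Z ≤ B * #(Z.image (Int.castRingHom (ZMod p) ∘ ·)) := card_le_mul_card_image _ _ hfiber
    _ ≤ B * ((map (Int.castRingHom (ZMod p)) F).totalDegree * p) := by
        gcongr
        simpa using (card_le_card hzeros).trans (card_zeros_le_totalDegree_mul_card_pow hF)
    _ ≤ B * (F.totalDegree * p) := by
        gcongr
        exact sup_mono (support_map_subset _ _)

theorem map_intCast_zmod_ne_zero_of_not_dvd_eval_pderiv {i : Fin 2} {z : Fin 2 → ℤ}
    (hz : ¬ (p : ℤ) ∣ eval z (pderiv i F)) : map (Int.castRingHom (ZMod p)) F ≠ 0 := by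
  contrapose! hz
  rw [← ZMod.intCast_zmod_eq_zero_iff_dvd, ← eq_intCast (Int.castRingHom (ZMod p)), map_eval,
    ← pderiv_map, hz, map_zero, map_zero]

end ResidueClasses

theorem exists_finset_primes (k : ℕ) {n : ℕ} (hn : n ≠ 0) :
    ∃ S : Finset ℕ, #S = k ∧ ∀ p ∈ S, p.Prime ∧ n < p ∧ p ≤ 2 ^ k * n := by
  induction k with
  | zero => exact ⟨∅, by simp⟩
  | succ k ih =>
    obtain ⟨S, hS, hSp⟩ := ih
    obtain ⟨p, hp, hlt, hle⟩ := Nat.exists_prime_lt_and_le_two_mul (2 ^ k * n) (by positivity)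
    have hn' : n ≤ 2 ^ k * n := Nat.le_mul_of_pos_left _ (by positivity)
    have hpS : p ∉ S := fun h ↦ ((hSp p h).2.2.trans_lt hlt).false
    refine ⟨insert p S, by rw [card_insert_of_notMem hpS, hS], ?_⟩
    rw [pow_succ']
    refine forall_mem_insert _ _ _ |>.mpr ⟨⟨hp, by lia, by lia⟩, fun q hq ↦ ?_⟩
    obtain ⟨hq, hnq, hqn⟩ := hSp q hq
    exact ⟨hq, hnq, by lia⟩

section Siegel

variable {ι κ : Type*} [Fintype ι] [Fintype κ] {R : ℝ}

theorem exists_mulVec_eq_zero_abs_le (hR : 1 ≤ R) {A : Matrix κ ι ℤ}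
    (hA : ∀ i j, |(A i j : ℝ)| ≤ R) (hκ : Fintype.card κ < Fintype.card ι) :
    ∃ t : ι → ℤ, t ≠ 0 ∧ A.mulVec t = 0 ∧
      ∀ j, |(t j : ℝ)| ≤ (Fintype.card ι * R) ^ Fintype.card ι := by
  have hι : 1 ≤ Fintype.card ι := by lia
  have hbase : 1 ≤ Fintype.card ι * R := one_le_mul_of_one_le_of_one_le (by exact_mod_cast hι) hR
  rcases Nat.eq_zero_or_pos (Fintype.card κ) with h0 | hpos
  · have := Fintype.card_eq_zero_iff.mp h0
    have := Fintype.card_pos_iff.mp hι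
    exact ⟨1, one_ne_zero, Subsingleton.elim _ _, fun j ↦ by simpa using one_le_pow₀ hbase⟩
  obtain ⟨t, ht, hAt, hnorm⟩ := Int.Matrix.exists_ne_zero_int_vec_norm_le A hκ hpos
  refine ⟨t, ht, hAt, fun j ↦ ?_⟩
  have hAR : max 1 (@norm _ Matrix.seminormedAddCommGroup.toNorm A) ≤ R :=
    max_le hR ((Matrix.norm_le_iff (by positivity)).mpr fun i j ↦
      (Int.norm_eq_abs _).trans_le (hA i j))
  have hκι : (Fintype.card κ : ℝ) + 1 ≤ Fintype.card ι := by exact_mod_cast hκ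
  have hexp : Fintype.card κ / ((Fintype.card ι : ℝ) - Fintype.card κ) ≤ Fintype.card ι := by
    rw [div_le_iff₀ (by linarith)]
    nlinarith
  calc |(t j : ℝ)| ≤ ‖t‖ := by simpa only [Int.norm_eq_abs] using norm_le_pi_norm t j
    _ ≤ _ := hnorm
    _ ≤ (Fintype.card ι * R) ^ (Fintype.card κ / ((Fintype.card ι : ℝ) - Fintype.card κ)) := by
        have : (0 : ℝ) ≤ Fintype.card ι - Fintype.card κ := by linarith
        gcongr
    _ ≤ (Fintype.card ι * R) ^ (Fintype.card ι : ℝ) := Real.rpow_le_rpow_of_exponent_le hbase hexp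
    _ = _ := Real.rpow_natCast _ _

theorem exists_dotProduct_eq_zero_abs_le (hR : 1 ≤ R) {S : Set (ι → ℤ)}
    (hS : ∀ v ∈ S, ∀ j, |(v j : ℝ)| ≤ R) {c : ι → ℚ} (hc : c ≠ 0)
    (hcS : ∀ v ∈ S, c ⬝ᵥ (Int.castRingHom ℚ ∘ v) = 0) :
    ∃ t : ι → ℤ, t ≠ 0 ∧ (∀ v ∈ S, t ⬝ᵥ v = 0) ∧
      ∀ j, |(t j : ℝ)| ≤ (Fintype.card ι * R) ^ Fintype.card ι := by
  obtain ⟨κ, a, -, hspan, hli⟩ :=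
    exists_linearIndependent' ℚ (fun v : S ↦ Int.castRingHom ℚ ∘ v.1)
  have := hli.finite
  have := Fintype.ofFinite κ
  have hκ : Fintype.card κ < Fintype.card ι := by
    rw [← finrank_span_eq_card hli, ← Module.finrank_fintype_fun_eq_card ℚ (η := ι)]
    refine Submodule.finrank_lt fun htop ↦ hc (dotProduct_eq_zero c fun w ↦ ?_)
    have hle : Submodule.span ℚ (Set.range ((fun v : S ↦ Int.castRingHom ℚ ∘ v.1) ∘ a)) ≤
        (dotProductBilin ℚ ℚ c).ker :=
      Submodule.span_le.mpr (Set.range_subset_iff.mpr fun k ↦ hcS _ (a k).2)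
    exact hle (htop ▸ Submodule.mem_top)
  obtain ⟨t, ht, hAt, hbound⟩ := exists_mulVec_eq_zero_abs_le hR
    (A := Matrix.of fun k ↦ (a k).1) (fun k ↦ hS _ (a k).2) hκ
  refine ⟨t, ht, fun v hv ↦ ?_, hbound⟩
  have hle : Submodule.span ℚ (Set.range fun v : S ↦ Int.castRingHom ℚ ∘ v.1) ≤
      (dotProductBilin ℚ ℚ (Int.castRingHom ℚ ∘ t)).ker := by
    rw [← hspan]
    refine Submodule.span_le.mpr (Set.range_subset_iff.mpr fun k ↦ ?_)
    have hk := congrArg (Int.castRingHom ℚ) (congrFun hAt k)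
    rw [Matrix.mulVec, dotProduct_comm, RingHom.map_dotProduct, Pi.zero_apply, map_zero] at hk
    exact hk
  have hv0 := hle (Submodule.subset_span ⟨⟨v, hv⟩, rfl⟩)
  refine (Int.castRingHom ℚ).injective_int ?_
  rw [RingHom.map_dotProduct, map_zero]
  exact hv0

end Siegel

section Derivative

variable {σ R : Type*} [CommSemiring R] {F : MvPolynomial σ R} {i : σ}

theorem totalDegree_pderiv_lt (hF : pderiv i F ≠ 0) :
    (pderiv i F).totalDegree < F.totalDegree := by
  obtain ⟨e, he, hdeg⟩ := exists_mem_eq_sup _ (support_nonempty.mpr hF) Finsupp.degree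
  have hmem : e + Finsupp.single i 1 ∈ F.support := by
    rw [mem_support_iff, coeff_pderiv] at he
    exact mem_support_iff.mpr (left_ne_zero_of_mul he)
  calc (pderiv i F).totalDegree = e.degree := hdeg
    _ < (e + Finsupp.single i 1).degree := by simp
    _ ≤ F.totalDegree := le_totalDegree hmem

theorem eq_zero_of_mem_support_of_pderiv_eq_zero [NoZeroDivisors R] [CharZero R]
    (hF : pderiv i F = 0) {e : σ →₀ ℕ} (he : e ∈ F.support) : e i = 0 := by
  by_contra hei
  have hsub : e - Finsupp.single i 1 + Finsupp.single i 1 = e :=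
    tsub_add_cancel_of_le (Finsupp.single_le_iff.mpr (Nat.one_le_iff_ne_zero.mpr hei))
  have hcoeff := coeff_pderiv (i := i) F (e - Finsupp.single i 1)
  rw [hF, hsub, coeff_zero] at hcoeff
  exact mul_ne_zero (mem_support_iff.mp he) (Nat.cast_add_one_ne_zero _) hcoeff.symm

theorem eval_update_eq_of_pderiv_eq_zero [Finite σ] [DecidableEq σ] [NoZeroDivisors R]
    [CharZero R] (hF : pderiv i F = 0) (z : σ → R) (y : R) :
    eval (Function.update z i y) F = eval z F := by
  cases nonempty_fintype σ
  rw [eval_eq', eval_eq']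
  refine sum_congr rfl fun e he ↦ congrArg _ (prod_congr rfl fun j _ ↦ ?_)
  obtain rfl | hj := eq_or_ne j i
  · rw [eq_zero_of_mem_support_of_pderiv_eq_zero hF he, pow_zero, pow_zero]
  · rw [Function.update_of_ne hj]

theorem not_dvd_pderiv {σ K : Type*} [CommRing K] [IsDomain K] {F : MvPolynomial σ K} {i : σ}
    (hF : pderiv i F ≠ 0) : ¬ F ∣ pderiv i F := fun hdvd ↦
  (totalDegree_pderiv_lt hF).not_ge (totalDegree_le_of_dvd_of_isDomain hdvd hF)

end Derivative

theorem associated_of_dvd_of_totalDegree_le {σ K : Type*} [Field K] {F G : MvPolynomial σ K}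
    (hFG : F ∣ G) (hG : G ≠ 0) (hdeg : G.totalDegree ≤ F.totalDegree) : Associated F G := by
  obtain ⟨H, rfl⟩ := hFG
  rw [totalDegree_mul_of_isDomain (left_ne_zero_of_mul hG) (right_ne_zero_of_mul hG)] at hdeg
  have hH := totalDegree_eq_zero_iff_eq_C.mp (by lia : H.totalDegree = 0)
  have hc : coeff 0 H ≠ 0 := fun h ↦ right_ne_zero_of_mul hG (by rw [hH, h, C_0])
  rw [hH]
  exact associated_mul_unit_right _ _ (hc.isUnit.map C)

theorem totalDegree_map_of_injective {σ R S : Type*} [CommSemiring R] [CommSemiring S]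
    {f : R →+* S} (hf : Function.Injective f) (F : MvPolynomial σ R) :
    (map f F).totalDegree = F.totalDegree := by
  rw [totalDegree, totalDegree, support_map_of_injective _ hf]

theorem eval_intCast_eq_zero_of_eval_eq_zero {σ : Type*} {F G : MvPolynomial σ ℤ}
    (hFG : map (Int.castRingHom ℚ) F ∣ map (Int.castRingHom ℚ) G) {z : σ → ℤ}
    (hz : eval z F = 0) : eval z G = 0 := by
  obtain ⟨H, hH⟩ := hFG
  refine (Int.castRingHom ℚ).injective_int ?_
  rw [map_eval, hH, map_mul, ← map_eval, hz, map_zero, zero_mul]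

theorem abs_eval_le {σ : Type*} [Finite σ] {G : MvPolynomial σ ℤ} {A M : ℝ} (hM : 1 ≤ M)
    (hG : ∀ e, |((coeff e G : ℤ) : ℝ)| ≤ A) {z : σ → ℤ} (hz : ∀ i, |(z i : ℝ)| ≤ M) :
    |(eval z G : ℝ)| ≤ #G.support * (A * M ^ G.totalDegree) := by
  cases nonempty_fintype σ
  rw [eval_eq', Int.cast_sum, ← nsmul_eq_mul]
  refine (abs_sum_le_sum_abs _ _).trans (sum_le_card_nsmul _ _ _ fun e he ↦ ?_)
  have hA : 0 ≤ A := (abs_nonneg _).trans (hG e)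
  calc |((coeff e G * ∏ i, z i ^ e i : ℤ) : ℝ)|
      = |((coeff e G : ℤ) : ℝ)| * ∏ i, |(z i : ℝ)| ^ e i := by simp [abs_mul, abs_prod]
    _ ≤ A * ∏ i, M ^ e i := by
        gcongr with i
        · exact hG e
        · exact hz i
    _ = A * M ^ e.degree := by rw [prod_pow_eq_pow_sum, Finsupp.degree_eq_sum]
    _ ≤ A * M ^ G.totalDegree := by
        gcongr
        exact le_totalDegree he

theorem abs_coeff_pderiv_le {σ : Type*} {F : MvPolynomial σ ℤ} {A : ℝ}
    (hF : ∀ e, |((coeff e F : ℤ) : ℝ)| ≤ A) (i : σ) (e : σ →₀ ℕ) :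
    |((coeff e (pderiv i F) : ℤ) : ℝ)| ≤ A * F.totalDegree := by
  have hA : 0 ≤ A := (abs_nonneg _).trans (hF 0)
  rw [coeff_pderiv]
  by_cases he : e + Finsupp.single i 1 ∈ F.support
  · have hle : e i + 1 ≤ F.totalDegree := by
      have := Finsupp.le_degree i (e + Finsupp.single i 1)
      rw [Finsupp.add_apply, Finsupp.single_eq_same] at this
      exact this.trans (le_totalDegree he)
    rw [Int.cast_mul, abs_mul]
    gcongr
    · exact hF _
    · rw [abs_of_nonneg (by positivity)]
      exact_mod_cast hle
  · rw [notMem_support_iff.mp he, zero_mul, Int.cast_zero, abs_zero]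
    positivity

theorem abs_eval_pderiv_le {F : MvPolynomial (Fin 2) ℤ} {d : ℕ} (hd : F.totalDegree ≤ d)
    {A M : ℝ} (hM : 1 ≤ M) (hF : ∀ e, |((coeff e F : ℤ) : ℝ)| ≤ A) (i : Fin 2) {z : Fin 2 → ℤ}
    (hz : ∀ i, |(z i : ℝ)| ≤ M) :
    |(eval z (pderiv i F) : ℝ)| ≤ #(exponentsOfDegreeLE (Fin 2) d) * (A * d * M ^ d) := by
  have hA : 0 ≤ A := (abs_nonneg _).trans (hF 0)
  obtain h0 | h0 := eq_or_ne (pderiv i F) 0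
  · rw [h0, map_zero, Int.cast_zero, abs_zero]
    positivity
  have hdeg : (pderiv i F).totalDegree ≤ d := (totalDegree_pderiv_lt h0).le.trans hd
  refine (abs_eval_le hM (abs_coeff_pderiv_le hF i) hz).trans ?_
  gcongr
  exact support_subset_exponentsOfDegreeLE_iff.mpr hdeg

theorem exists_forall_eval_eq_zero_abs_coeff_le {σ : Type*} [Fintype σ] [DecidableEq σ]
    {G : MvPolynomial σ ℚ} (hG : G ≠ 0) {d : ℕ} (hd : G.totalDegree ≤ d) {M : ℝ} (hM : 1 ≤ M)
    {Z : Finset (σ → ℤ)} (hZG : ∀ z ∈ Z, eval (Int.castRingHom ℚ ∘ z) G = 0)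
    (hZM : ∀ z ∈ Z, ∀ i, |(z i : ℝ)| ≤ M) :
    ∃ F : MvPolynomial σ ℤ, F ≠ 0 ∧ F.totalDegree ≤ d ∧ (∀ z ∈ Z, eval z F = 0) ∧
      ∀ e, |((coeff e F : ℤ) : ℝ)| ≤
        (#(exponentsOfDegreeLE σ d) * M ^ d) ^ #(exponentsOfDegreeLE σ d) := by
  set E := exponentsOfDegreeLE σ d
  have hGE : G.support ⊆ E := support_subset_exponentsOfDegreeLE_iff.mpr hd
  have hbound : ∀ z ∈ Z, ∀ e : E, |((monomialVector E z e : ℤ) : ℝ)| ≤ M ^ d := fun z hz e ↦ by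
    have := abs_monomialVector_le (z := Int.castRingHom ℝ ∘ z) (hZM z hz) E e
    rw [map_monomialVector] at this
    refine this.trans ?_
    rw [monomialVector, prod_pow_eq_pow_sum, ← Finsupp.degree_eq_sum]
    exact pow_le_pow_right₀ hM (mem_exponentsOfDegreeLE.mp e.2)
  have hrel : ∀ z ∈ Z,
      (fun e : E ↦ coeff e.1 G) ⬝ᵥ (Int.castRingHom ℚ ∘ monomialVector E z) = 0 := fun z hz ↦ by
    rw [← map_monomialVector, ← eval_eq_dotProduct_monomialVector hGE, hZG z hz]
  have hcoeff : (fun e : E ↦ coeff e.1 G) ≠ 0 := fun h ↦ by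
    obtain ⟨e, he⟩ := support_nonempty.mpr hG
    exact mem_support_iff.mp he (congrFun h ⟨e, hGE he⟩)
  obtain ⟨t, ht, htZ, ht_le⟩ := exists_dotProduct_eq_zero_abs_le (one_le_pow₀ hM)
    (S := monomialVector E '' Z) (Set.forall_mem_image.mpr hbound) hcoeff
    (Set.forall_mem_image.mpr hrel)
  rw [Fintype.card_coe] at ht_le
  obtain ⟨F, hF, hFE, hFcoeff, hFeval⟩ := exists_support_subset_eval_eq_dotProduct ht
  refine ⟨F, hF, support_subset_exponentsOfDegreeLE_iff.mp hFE,
    fun z hz ↦ (hFeval z).trans (htZ _ ⟨z, hz, rfl⟩), fun e ↦ ?_⟩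
  by_cases he : e ∈ F.support
  · exact hFcoeff ⟨e, hFE he⟩ ▸ ht_le ⟨e, hFE he⟩
  · rw [notMem_support_iff.mp he, Int.cast_zero, abs_zero]
    positivity

section PlaneCurves

variable {F : MvPolynomial (Fin 2) ℤ} {Z : Finset (Fin 2 → ℤ)}

theorem card_le_totalDegree_of_forall_apply_eq (hF : Irreducible (map (Int.castRingHom ℚ) F))
    {i : Fin 2} {x : ℤ} (hline : ¬ map (Int.castRingHom ℚ) F ∣ X i - C (x : ℚ))
    (hZF : ∀ z ∈ Z, eval z F = 0) (hZ : ∀ z ∈ Z, z i = x) : #Z ≤ F.totalDegree := by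
  refine (card_le_totalDegree_mul_totalDegree_of_map Int.cast_injective hF hline hZF
    fun z hz ↦ ?_).trans (mul_le_of_le_one_right (Nat.zero_le _) ?_)
  · simp [hZ z hz]
  · exact (totalDegree_sub_C_le _ _).trans (totalDegree_X i).le

theorem pderiv_ne_zero_of_not_dvd (hF : Irreducible (map (Int.castRingHom ℚ) F)) {i j : Fin 2}
    (hij : i ≠ j) {z : Fin 2 → ℤ} (hline : ¬ map (Int.castRingHom ℚ) F ∣ X i - C (z i : ℚ))
    (hz : eval z F = 0) : pderiv j F ≠ 0 := by
  intro h0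
  have hinj : Function.Injective fun n : ℕ ↦ Function.update z j n :=
    (Function.update_injective z j).comp Nat.cast_injective
  have hcard := card_le_totalDegree_of_forall_apply_eq hF hline
    (Z := (range (F.totalDegree + 1)).image fun n : ℕ ↦ Function.update z j n)
    (forall_mem_image.mpr fun n _ ↦ (eval_update_eq_of_pderiv_eq_zero h0 z n).trans hz)
    (forall_mem_image.mpr fun n _ ↦ Function.update_of_ne hij _ _)
  rw [card_image_of_injective _ hinj, card_range] at hcard
  exact hcard.not_gt F.totalDegree.lt_succ_self

theorem card_le_or_exists_associated_abs_coeff_le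
    (hF : Irreducible (map (Int.castRingHom ℚ) F)) {d : ℕ} (hd : F.totalDegree = d) {M : ℝ}
    (hM : 1 ≤ M) (hZF : ∀ z ∈ Z, eval z F = 0) (hZM : ∀ z ∈ Z, ∀ i, |(z i : ℝ)| ≤ M) :
    #Z ≤ d * d ∨ ∃ F' : MvPolynomial (Fin 2) ℤ,
      Associated (map (Int.castRingHom ℚ) F) (map (Int.castRingHom ℚ) F') ∧
      ∀ e, |((coeff e F' : ℤ) : ℝ)| ≤
        (#(exponentsOfDegreeLE (Fin 2) d) * M ^ d) ^ #(exponentsOfDegreeLE (Fin 2) d) := by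
  have hdeg := totalDegree_map_of_injective (σ := Fin 2) (Int.castRingHom ℚ).injective_int
  obtain ⟨F', hF', hF'deg, hF'Z, hcoeff⟩ := exists_forall_eval_eq_zero_abs_coeff_le hF.ne_zero
    (((hdeg F).trans hd).le) hM (fun z hz ↦ by rw [← map_eval, hZF z hz, map_zero]) hZM
  by_cases hdvd : map (Int.castRingHom ℚ) F ∣ map (Int.castRingHom ℚ) F'
  · refine .inr ⟨F', associated_of_dvd_of_totalDegree_le hdvd ?_ ?_, hcoeff⟩
    · rwa [Ne, map_eq_zero_iff _ (map_injective _ Int.cast_injective)]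
    · rwa [hdeg, hdeg, hd]
  · refine .inl ((card_le_totalDegree_mul_totalDegree_of_map Int.cast_injective hF hdvd hZF
      fun z hz ↦ ?_).trans (Nat.mul_le_mul hd.le ((hdeg F').trans_le hF'deg)))
    rw [← map_eval, hF'Z z hz, map_zero]

end PlaneCurves

section DeterminantMethod

variable {F : MvPolynomial (Fin 2) ℤ} {Z : Finset (Fin 2 → ℤ)} {d : ℕ}

theorem card_filter_eval_pderiv_eq_zero_le (hF : Irreducible (map (Int.castRingHom ℚ) F))
    (hd : F.totalDegree = d) {i : Fin 2} (hi : pderiv i F ≠ 0) (hZF : ∀ z ∈ Z, eval z F = 0) :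
    #{z ∈ Z | eval z (pderiv i F) = 0} ≤ d * d := by
  have hpderiv : pderiv i (map (Int.castRingHom ℚ) F) ≠ 0 := by
    rwa [pderiv_map, Ne, map_eq_zero_iff _ (map_injective _ Int.cast_injective)]
  refine (card_le_totalDegree_mul_totalDegree_of_map Int.cast_injective hF (not_dvd_pderiv hpderiv)
    (fun z hz ↦ hZF z (mem_filter.mp hz).1) fun z hz ↦ ?_).trans (Nat.mul_le_mul hd.le ?_)
  · rw [pderiv_map, ← map_eval, (mem_filter.mp hz).2, map_zero]
  · rw [← hd, ← totalDegree_map_of_injective (Int.castRingHom ℚ).injective_int]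
    exact (totalDegree_pderiv_lt hpderiv).le

theorem exists_mem_not_dvd {S : Finset ℕ} (hS : ∀ p ∈ S, p.Prime) {Q : ℕ}
    (hQ : ∀ p ∈ S, Q ≤ p) {n : ℤ} (hn : n ≠ 0) (hlt : |(n : ℝ)| < (Q : ℝ) ^ #S) :
    ∃ p ∈ S, ¬ (p : ℤ) ∣ n := by
  by_contra! hdvd
  have hprod : ∏ p ∈ S, (p : ℤ) ∣ n := prod_dvd_of_coprime (fun p hp q hq hpq ↦
    Nat.isCoprime_iff_coprime.mpr ((Nat.coprime_primes (hS p hp) (hS q hq)).mpr hpq)) hdvd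
  have hle : (Q : ℝ) ^ #S ≤ ∏ p ∈ S, (p : ℝ) := by
    rw [← prod_const]
    exact prod_le_prod (fun _ _ ↦ by positivity) fun p hp ↦ by exact_mod_cast hQ p hp
  refine hn (Int.eq_zero_of_abs_lt_dvd hprod (Int.cast_lt (R := ℝ) |>.mp ?_))
  push_cast
  exact hlt.trans_le hle

variable {P : Fin 2 → ℝ} {E : Finset (Fin 2 →₀ ℕ)} {g : ℕ}

theorem card_le_of_forall_not_dvd_eval_pderiv (hF : Irreducible (map (Int.castRingHom ℚ) F))
    (hd : F.totalDegree = d) (hEg : E ⊆ exponentsOfDegreeLE (Fin 2) g)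
    (hEF : ∀ G, G ≠ 0 → G.support ⊆ E → ¬ map (Int.castRingHom ℚ) F ∣ G)
    {p : ℕ} (hp : p.Prime)
    (hE : (#E).factorial * ∏ e ∈ E, ∏ i, P i ^ e i < (p : ℝ) ^ (#E).choose 2)
    (hZF : ∀ z ∈ Z, eval z F = 0) (hZP : ∀ z ∈ Z, ∀ i, |(z i : ℝ)| ≤ P i)
    (hZp : ∀ z ∈ Z, ¬ (p : ℤ) ∣ eval z (pderiv 1 F)) : #Z ≤ d * g * (d * p) := by
  have := Fact.mk hp
  obtain rfl | ⟨z, hz⟩ := Z.eq_empty_or_nonempty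
  · simp
  rw [← hd]
  refine card_le_mul_of_card_residueClass_le
    (map_intCast_zmod_ne_zero_of_not_dvd_eval_pderiv (hZp z hz)) hZF fun z₀ hz₀ ↦ ?_
  have hsub : ∀ z ∈ Z.filter fun z ↦ ∀ i, (p : ℤ) ∣ z i - z₀ i, z ∈ Z :=
    fun z hz ↦ (mem_filter.mp hz).1
  obtain ⟨G, hG, hGE, hGZ⟩ := exists_eval_eq_zero_of_residueClass
    ((Nat.prime_iff_prime_int.mp hp).coprime_iff_not_dvd.mpr (hZp z₀ hz₀)) hE
    (fun z hz ↦ hZF z (hsub z hz)) (fun z hz ↦ (mem_filter.mp hz).2)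
    (fun z hz ↦ hZP z (hsub z hz))
  refine (card_le_totalDegree_mul_totalDegree_of_map Int.cast_injective hF (hEF G hG hGE)
    (fun z hz ↦ hZF z (hsub z hz)) hGZ).trans (Nat.mul_le_mul_left _ ?_)
  exact support_subset_exponentsOfDegreeLE_iff.mp (hGE.trans hEg)

variable {M : ℝ} {Q k : ℕ}

theorem card_le_of_abs_coeff_le (hF : Irreducible (map (Int.castRingHom ℚ) F))
    (hd : F.totalDegree = d) (hpderiv : pderiv 1 F ≠ 0) {A : ℝ}
    (hA : ∀ e, |((coeff e F : ℤ) : ℝ)| ≤ A) (hEg : E ⊆ exponentsOfDegreeLE (Fin 2) g)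
    (hEF : ∀ G, G ≠ 0 → G.support ⊆ E → ¬ map (Int.castRingHom ℚ) F ∣ G) (hQ : Q ≠ 0)
    (hE : (#E).factorial * ∏ e ∈ E, ∏ i, P i ^ e i < (Q : ℝ) ^ (#E).choose 2) (hM : 1 ≤ M)
    (hPM : ∀ i, P i ≤ M)
    (hk : #(exponentsOfDegreeLE (Fin 2) d) * (A * d * M ^ d) < (Q : ℝ) ^ k)
    (hZF : ∀ z ∈ Z, eval z F = 0) (hZP : ∀ z ∈ Z, ∀ i, |(z i : ℝ)| ≤ P i) :
    #Z ≤ d * d + k * (d * g * (d * (2 ^ k * Q))) := by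
  obtain ⟨S, rfl, hS⟩ := exists_finset_primes k hQ
  have hcover : Z ⊆ {z ∈ Z | eval z (pderiv 1 F) = 0} ∪
      S.biUnion fun p ↦ {z ∈ Z | ¬ (p : ℤ) ∣ eval z (pderiv 1 F)} := fun z hz ↦ by
    simp only [mem_union, mem_biUnion, mem_filter, hz, true_and]
    refine or_iff_not_imp_left.mpr fun hne ↦
      exists_mem_not_dvd (fun p hp ↦ (hS p hp).1) (fun p hp ↦ (hS p hp).2.1.le) hne ?_
    exact (abs_eval_pderiv_le hd.le hM hA 1 fun i ↦ (hZP z hz i).trans (hPM i)).trans_lt hk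
  have hprime : ∀ p ∈ S, #{z ∈ Z | ¬ (p : ℤ) ∣ eval z (pderiv 1 F)} ≤
      d * g * (d * (2 ^ #S * Q)) := fun p hp ↦ by
    obtain ⟨hp, hQp, hpQ⟩ := hS p hp
    refine (card_le_of_forall_not_dvd_eval_pderiv hF hd hEg hEF hp (hE.trans_le ?_)
      (fun z hz ↦ hZF z (mem_filter.mp hz).1) (fun z hz ↦ hZP z (mem_filter.mp hz).1)
      fun z hz ↦ (mem_filter.mp hz).2).trans ?_
    · gcongr
    · gcongr
  calc #Z ≤ _ := card_le_card hcover
    _ ≤ #{z ∈ Z | eval z (pderiv 1 F) = 0} +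
        #(S.biUnion fun p ↦ {z ∈ Z | ¬ (p : ℤ) ∣ eval z (pderiv 1 F)}) := card_union_le _ _
    _ ≤ _ := add_le_add (card_filter_eval_pderiv_eq_zero_le hF hd hpderiv hZF)
        (card_biUnion_le_card_mul _ _ _ hprime)

theorem card_le_of_forall_not_dvd (hF : Irreducible (map (Int.castRingHom ℚ) F))
    (hd : F.totalDegree = d)
    (hline : ∀ i (x : ℤ), ¬ map (Int.castRingHom ℚ) F ∣ X i - C (x : ℚ))
    (hEg : E ⊆ exponentsOfDegreeLE (Fin 2) g)
    (hEF : ∀ G, G ≠ 0 → G.support ⊆ E → ¬ map (Int.castRingHom ℚ) F ∣ G) (hQ : Q ≠ 0)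
    (hE : (#E).factorial * ∏ e ∈ E, ∏ i, P i ^ e i < (Q : ℝ) ^ (#E).choose 2) (hM : 1 ≤ M)
    (hPM : ∀ i, P i ≤ M) {D : ℕ} (hD : #(exponentsOfDegreeLE (Fin 2) d) = D)
    (hk : D * ((D * M ^ d) ^ D * d * M ^ d) < (Q : ℝ) ^ k)
    (hZF : ∀ z ∈ Z, eval z F = 0) (hZP : ∀ z ∈ Z, ∀ i, |(z i : ℝ)| ≤ P i) :
    #Z ≤ d * d + k * (d * g * (d * (2 ^ k * Q))) := by
  obtain rfl | ⟨z, hz⟩ := Z.eq_empty_or_nonempty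
  · simp
  obtain hle | ⟨F', hFF', hcoeff⟩ := card_le_or_exists_associated_abs_coeff_le hF hd hM hZF
    fun z hz i ↦ (hZP z hz i).trans (hPM i)
  · exact hle.trans (Nat.le_add_right _ _)
  have hF' := hFF'.irreducible hF
  have hF'Z : ∀ z ∈ Z, eval z F' = 0 :=
    fun z hz ↦ eval_intCast_eq_zero_of_eval_eq_zero hFF'.dvd (hZF z hz)
  have hdeg := totalDegree_map_of_injective (σ := Fin 2) (Int.castRingHom ℚ).injective_int
  have hF'd : F'.totalDegree = d := by
    rw [← hd, ← hdeg, ← hdeg]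
    exact le_antisymm (totalDegree_le_of_dvd_of_isDomain hFF'.symm.dvd hF.ne_zero)
      (totalDegree_le_of_dvd_of_isDomain hFF'.dvd hF'.ne_zero)
  subst hD
  refine card_le_of_abs_coeff_le hF' hF'd ?_ hcoeff hEg
    (fun G hG hGE h ↦ hEF G hG hGE (hFF'.dvd.trans h)) hQ hE hM hPM hk hF'Z hZP
  exact pderiv_ne_zero_of_not_dvd hF' (zero_ne_one (α := Fin 2))
    (fun h ↦ hline 0 (z 0) (hFF'.dvd.trans h)) (hF'Z z hz)

end DeterminantMethod

section Gnomon

theorem sum_Ico_natCast_le {l N : ℕ} (h : l ≤ N) :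
    ∑ i ∈ Ico l N, (i : ℝ) ≤ (N - l) * ((N + l) / 2) := by
  induction N, h using Nat.le_induction with
  | base => simp
  | succ N hN ih =>
    rw [sum_Ico_succ_top hN]
    push_cast
    linarith

theorem sum_range_sum_Ico_le {a b : ℝ} (ha : 0 ≤ a) (hb : 0 ≤ b) (m : ℕ) {l N : ℕ} (h : l ≤ N) :
    ∑ i ∈ range m, ∑ j ∈ Ico l N, (i * a + j * b) ≤ m * (N - l) * (m * a + (N + l) * b / 2) := by
  have hlN : (0 : ℝ) ≤ N - l := sub_nonneg.mpr (by exact_mod_cast h)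
  have hrow : ∀ i ∈ range m,
      ∑ j ∈ Ico l N, (i * a + j * b) ≤ (N - l) * (m * a + (N + l) * b / 2) := fun i hi ↦ by
    have hi : (i : ℝ) ≤ m := by exact_mod_cast (mem_range.mp hi).le
    calc ∑ j ∈ Ico l N, (i * a + j * b)
        = (N - l) * (i * a) + (∑ j ∈ Ico l N, (j : ℝ)) * b := by
          rw [sum_add_distrib, sum_const, Nat.card_Ico, nsmul_eq_mul, Nat.cast_sub h, sum_mul]
      _ ≤ (N - l) * (m * a) + (N - l) * ((N + l) / 2) * b := by
          gcongr
          exact sum_Ico_natCast_le h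
      _ = (N - l) * (m * a + (N + l) * b / 2) := by ring
  calc _ ≤ #(range m) • ((N - l) * (m * a + (N + l) * b / 2)) := sum_le_card_nsmul _ _ _ hrow
    _ = _ := by rw [card_range, nsmul_eq_mul, mul_assoc]

/-- The exponents in the box below `N` of the monomials that are not divisible by the monomial
with exponent `m`. They form an L-shaped region of the plane when `m ≤ N`. -/
def gnomon (m N : ℕ × ℕ) : Finset (ℕ × ℕ) := {e ∈ range N.1 ×ˢ range N.2 | ¬ m ≤ e}

variable {m N : ℕ × ℕ}

theorem sum_gnomon {M : Type*} [AddCommMonoid M] (h : m ≤ N) (f : ℕ × ℕ → M) :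
    ∑ e ∈ gnomon m N, f e = ∑ i ∈ range m.1, ∑ j ∈ Ico 0 N.2, f (i, j) +
      ∑ j ∈ range m.2, ∑ i ∈ Ico m.1 N.1, f (i, j) := by
  have hdisj : Disjoint (range m.1 ×ˢ Ico 0 N.2) (Ico m.1 N.1 ×ˢ range m.2) :=
    disjoint_left.mpr fun e he he' ↦ by simp at he he'; lia
  have hunion : gnomon m N = range m.1 ×ˢ Ico 0 N.2 ∪ Ico m.1 N.1 ×ˢ range m.2 := by
    ext e
    have := h.1
    have := h.2
    simp [gnomon, Prod.le_def]
    lia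
  rw [hunion, sum_union hdisj, sum_product, sum_product_right]

theorem card_gnomon (h : m ≤ N) : (#(gnomon m N) : ℝ) = m.1 * N.2 + m.2 * (N.1 - m.1) := by
  rw [card_eq_sum_ones, sum_gnomon h]
  simp [Nat.cast_sub h.1]

theorem sum_weight_gnomon_le {a b B : ℝ} (ha : 0 ≤ a) (hb : 0 ≤ b) (h : m ≤ N)
    (hB₁ : m.1 * a + N.2 * b / 2 ≤ B) (hB₂ : m.2 * b + (N.1 + m.1) * a / 2 ≤ B) :
    ∑ e ∈ gnomon m N, (e.1 * a + e.2 * b) ≤ #(gnomon m N) * B := by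
  have hmN : (0 : ℝ) ≤ N.1 - m.1 := sub_nonneg.mpr (by exact_mod_cast h.1)
  have h₁ := sum_range_sum_Ico_le ha hb m.1 (Nat.zero_le N.2)
  have h₂ := sum_range_sum_Ico_le hb ha m.2 h.1
  simp only [Nat.cast_zero, sub_zero, add_zero] at h₁
  simp only [add_comm (_ * b)] at h₂
  rw [sum_gnomon h, card_gnomon h, add_mul]
  refine add_le_add (h₁.trans ?_) (h₂.trans ?_)
  · gcongr
  · rw [add_comm] at hB₂
    gcongr

end Gnomon

section ExponentSet

variable {a b K : ℝ} {m N : ℕ × ℕ}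

theorem one_le_or_one_le_of_ne_zero (hm : m ≠ 0) : (1 : ℝ) ≤ m.1 ∨ (1 : ℝ) ≤ m.2 := by
  by_contra! h
  exact hm (Prod.ext (by simpa using h.1) (by simpa using h.2))

theorem weight_pos (ha : 0 < a) (hb : 0 < b) (hm : m ≠ 0) : 0 < m.1 * a + m.2 * b := by
  rcases one_le_or_one_le_of_ne_zero hm with h | h <;> positivity

theorem mul_div_weight_le_one (ha : 0 < a) (hb : 0 < b) (ha1 : a ≤ 1) (hb1 : b ≤ 1)
    (hm : m ≠ 0) : a * b / (m.1 * a + m.2 * b) ≤ 1 := by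
  refine div_le_one_of_le₀ ?_ (by positivity)
  rcases one_le_or_one_le_of_ne_zero hm with h | h
  · nlinarith [show 0 ≤ m.2 * b by positivity]
  · nlinarith [show 0 ≤ m.1 * a by positivity]

theorem exists_natCast_mul_mem_Icc (ha : 0 < a) (ha1 : a ≤ 1) (K : ℕ) :
    ∃ N : ℕ, K ≤ N ∧ (N * a : ℝ) ∈ Set.Icc (K : ℝ) (K + 1) := by
  have hK : (K : ℝ) ≤ ⌈K / a⌉₊ * a := (div_le_iff₀ ha).mp (Nat.le_ceil _)
  have hKN : (K : ℝ) ≤ ⌈K / a⌉₊ := hK.trans (mul_le_of_le_one_right (by positivity) ha1)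
  have hN : (⌈K / a⌉₊ : ℝ) * a ≤ (K / a + 1) * a :=
    mul_le_mul_of_nonneg_right (Nat.ceil_lt_add_one (by positivity)).le ha.le
  rw [add_mul, div_mul_cancel₀ _ ha.ne', one_mul] at hN
  exact ⟨⌈K / a⌉₊, by exact_mod_cast hKN, hK, by linarith⟩

theorem le_card_gnomon_mul (ha : 0 < a) (hb : 0 < b) (hm : m ≠ 0) (h : m ≤ N)
    (hN₁ : K ≤ N.1 * a) (hN₂ : K ≤ N.2 * b) :
    K - m.1 * m.2 * (a * b / (m.1 * a + m.2 * b)) ≤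
      #(gnomon m N) * (a * b / (m.1 * a + m.2 * b)) := by
  have hw := weight_pos ha hb hm
  have hK : K ≤ (m.1 * N.2 + m.2 * N.1) * (a * b / (m.1 * a + m.2 * b)) := by
    rw [mul_div_assoc', le_div_iff₀ hw]
    have h₁ : m.1 * a * K ≤ m.1 * a * (N.2 * b) := by gcongr
    have h₂ : m.2 * b * K ≤ m.2 * b * (N.1 * a) := by gcongr
    linarith
  rw [card_gnomon h]
  linarith

theorem sum_weight_gnomon_le_choose {d : ℕ} {ε : ℝ} (hε : 0 ≤ ε) (ha : 0 < a) (hb : 0 < b)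
    (ha1 : a ≤ 1) (hb1 : b ≤ 1) (hm : m ≠ 0) (hmd : m ≤ (d, d)) (h : m ≤ N)
    (hN₁ : N.1 * a ∈ Set.Icc K (K + 1)) (hN₂ : N.2 * b ∈ Set.Icc K (K + 1))
    (hKd : (d : ℝ) ^ 2 + 2 ≤ K) (hKε : (d : ℝ) ^ 2 + 3 * d + 2 ≤ ε * (K - d ^ 2 - 1)) :
    2 ≤ #(gnomon m N) ∧ ∑ e ∈ gnomon m N, (e.1 * a + e.2 * b) ≤
      (#(gnomon m N)).choose 2 * (a * b / (m.1 * a + m.2 * b) + ε) := by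
  have hs := le_card_gnomon_mul ha hb hm h hN₁.1 hN₂.1
  have hu : 0 < a * b / (m.1 * a + m.2 * b) := div_pos (mul_pos ha hb) (weight_pos ha hb hm)
  have hu1 := mul_div_weight_le_one ha hb ha1 hb1 hm
  set u := a * b / (m.1 * a + m.2 * b)
  set s : ℝ := (#(gnomon m N) : ℝ) with hs_def
  have hm₁ : (m.1 : ℝ) ≤ d := by exact_mod_cast hmd.1
  have hm₂ : (m.2 : ℝ) ≤ d := by exact_mod_cast hmd.2
  have hmm : (m.1 : ℝ) * m.2 ≤ d ^ 2 := by
    rw [sq]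
    gcongr
  have hKs : K - d ^ 2 ≤ s := by
    refine le_of_mul_le_mul_right ?_ hu
    nlinarith
  have hcard : 2 ≤ #(gnomon m N) := by
    rw [← Nat.ofNat_le_cast (α := ℝ)]
    linarith
  have hsum : ∑ e ∈ gnomon m N, (e.1 * a + e.2 * b) ≤ s * ((K + 3 * d + 1) / 2) := by
    have h₁ : m.1 * a ≤ d * 1 := by gcongr
    have h₂ : m.2 * b ≤ d * 1 := by gcongr
    exact sum_weight_gnomon_le ha.le hb.le h (by linarith [hN₂.2]) (by linarith [hN₁.2])
  have hkey : K + 3 * d + 1 ≤ (s - 1) * (u + ε) := by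
    have h₁ : ε * (K - d ^ 2 - 1) ≤ ε * (s - 1) := by gcongr
    have h₂ : (m.1 * m.2 + 1) * u ≤ (d ^ 2 + 1) * 1 := by gcongr
    linarith
  refine ⟨hcard, hsum.trans ?_⟩
  rw [Nat.cast_choose_two, ← hs_def]
  have := mul_le_mul_of_nonneg_left hkey (Nat.cast_nonneg (α := ℝ) #(gnomon m N))
  linarith

theorem exists_gnomon_sum_weight_le_choose (d : ℕ) {ε : ℝ} (hε : 0 < ε) :
    ∃ R : ℕ, ∀ a b : ℝ, a ∈ Set.Icc ε 1 → b ∈ Set.Icc ε 1 → ∀ m ≠ 0, m ≤ (d, d) →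
      ∃ N : ℕ × ℕ, N.1 + N.2 ≤ R ∧ 2 ≤ #(gnomon m N) ∧
        ∑ e ∈ gnomon m N, (e.1 * a + e.2 * b) ≤
          (#(gnomon m N)).choose 2 * (a * b / (m.1 * a + m.2 * b) + ε) := by
  let K : ℕ := ⌈((d : ℝ) ^ 2 + 3 * d + 2) / ε⌉₊ + d ^ 2 + d + 2
  have hKd : (d : ℝ) ^ 2 + 2 ≤ K := by exact_mod_cast (by lia : d ^ 2 + 2 ≤ K)
  have hKε : (d : ℝ) ^ 2 + 3 * d + 2 ≤ ε * (K - d ^ 2 - 1) := by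
    rw [← div_le_iff₀' hε]
    have := Nat.le_ceil (((d : ℝ) ^ 2 + 3 * d + 2) / ε)
    push_cast [K]
    linarith [Nat.cast_nonneg (α := ℝ) d]
  have hR : ∀ {N : ℕ} {a : ℝ}, ε ≤ a → N * a ≤ K + 1 → N ≤ ⌈(K + 1) / ε⌉₊ := fun {N a} ha hN ↦ by
    have : (N : ℝ) ≤ (K + 1) / ε := (le_div_iff₀ hε).mpr (le_trans (by gcongr) hN)
    exact_mod_cast this.trans (Nat.le_ceil _)
  refine ⟨⌈(K + 1) / ε⌉₊ + ⌈(K + 1) / ε⌉₊, fun a b ha hb m hm hmd ↦ ?_⟩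
  obtain ⟨N₁, hKN₁, hN₁⟩ := exists_natCast_mul_mem_Icc (hε.trans_le ha.1) ha.2 K
  obtain ⟨N₂, hKN₂, hN₂⟩ := exists_natCast_mul_mem_Icc (hε.trans_le hb.1) hb.2 K
  have hdK : d ≤ K := by lia
  exact ⟨(N₁, N₂), add_le_add (hR ha.1 hN₁.2) (hR hb.1 hN₂.2),
    sum_weight_gnomon_le_choose hε.le (hε.trans_le ha.1) (hε.trans_le hb.1) ha.2 hb.2 hm hmd
      (hmd.trans ⟨hdK.trans hKN₁, hdK.trans hKN₂⟩) hN₁ hN₂ hKd hKε⟩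

theorem weight_fin_two (w : Fin 2 → ℝ) (e : Fin 2 →₀ ℕ) :
    Finsupp.weight w e = e 0 * w 0 + e 1 * w 1 := by
  simp [Finsupp.weight_apply, Finsupp.sum_fintype]

theorem exists_exponents_avoiding (d : ℕ) {ε : ℝ} (hε : 0 < ε) :
    ∃ R : ℕ, ∀ w : Fin 2 → ℝ, (∀ i, w i ∈ Set.Icc ε 1) → ∀ m : Fin 2 →₀ ℕ, m ≠ 0 →
      m.degree ≤ d → ∃ E ⊆ exponentsOfDegreeLE (Fin 2) R, (∀ e ∈ E, ¬ m ≤ e) ∧ 2 ≤ #E ∧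
        ∑ e ∈ E, Finsupp.weight w e ≤
          (#E).choose 2 * (w 0 * w 1 / Finsupp.weight w m + ε) := by
  obtain ⟨R, hR⟩ := exists_gnomon_sum_weight_le_choose d hε
  refine ⟨R, fun w hw m hm hmd ↦ ?_⟩
  let toExponent : ℕ × ℕ ≃ (Fin 2 →₀ ℕ) :=
    (finTwoArrowEquiv ℕ).symm.trans Finsupp.equivFunOnFinite.symm
  obtain ⟨N, hNR, hcard, hsum⟩ := hR (w 0) (w 1) (hw 0) (hw 1) (m 0, m 1)
    (fun h ↦ hm (toExponent.symm.injective h))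
    ⟨(Finsupp.le_degree 0 m).trans hmd, (Finsupp.le_degree 1 m).trans hmd⟩
  have hgnomon {q : ℕ × ℕ} :
      q ∈ gnomon (m 0, m 1) N ↔ (q.1 < N.1 ∧ q.2 < N.2) ∧ ¬ (m 0, m 1) ≤ q := by
    simp only [gnomon, mem_filter, mem_product, mem_range]
  refine ⟨(gnomon (m 0, m 1) N).map toExponent.toEmbedding,
    fun e he ↦ ?_, fun e he hme ↦ ?_, ?_, ?_⟩
  · obtain ⟨q, hq, rfl⟩ := mem_map.mp he
    have := hgnomon.mp hq
    rw [mem_exponentsOfDegreeLE, Finsupp.degree_eq_sum, Fin.sum_univ_two]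
    exact (add_le_add this.1.1.le this.1.2.le).trans hNR
  · obtain ⟨q, hq, rfl⟩ := mem_map.mp he
    exact (hgnomon.mp hq).2 ⟨hme 0, hme 1⟩
  · rwa [card_map]
  · rw [card_map, sum_map, weight_fin_two w m]
    simp only [weight_fin_two]
    exact hsum

end ExponentSet

section BalancedBox

variable {d : ℕ} {F : MvPolynomial (Fin 2) ℤ} {Z : Finset (Fin 2 → ℤ)} {w : Fin 2 → ℝ}

theorem prod_exp_mul_pow {σ : Type*} [Fintype σ] (w : σ → ℝ) (L : ℝ) (e : σ →₀ ℕ) :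
    ∏ i, Real.exp (w i * L) ^ e i = Real.exp (Finsupp.weight w e * L) := by
  rw [Finsupp.weight_apply, Finsupp.sum_fintype _ _ (by simp), sum_mul, Real.exp_sum]
  exact prod_congr rfl fun i _ ↦ by rw [← Real.exp_nat_mul, nsmul_eq_mul, mul_assoc]

theorem exists_natCast_mul_pow_lt_pow {A B : ℝ} (hA : 1 ≤ A) (hB : 1 ≤ B) :
    ∃ Q : ℕ, Q ≠ 0 ∧ Q ≤ (A + 1) * B ∧ ∀ a < A, ∀ n ≠ 0, a * B ^ n < Q ^ n := by
  have hAB : 1 ≤ A * B := one_le_mul_of_one_le_of_one_le hA hB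
  refine ⟨⌈A * B⌉₊, (Nat.ceil_pos.mpr (zero_lt_one.trans_le hAB)).ne',
    by linarith [Nat.ceil_lt_add_one (zero_le_one.trans hAB)], fun a ha n hn ↦ ?_⟩
  calc a * B ^ n < A * B ^ n := by gcongr
    _ ≤ A ^ n * B ^ n := by
      gcongr
      exact le_self_pow₀ hA hn
    _ = (A * B) ^ n := (mul_pow ..).symm
    _ ≤ (⌈A * B⌉₊ : ℝ) ^ n := by
      gcongr
      exact Nat.le_ceil _

theorem card_le_mul_exp_of_forall_not_dvd (hF : Irreducible (map (Int.castRingHom ℚ) F))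
    (hd : F.totalDegree = d)
    (hline : ∀ i (x : ℤ), ¬ map (Int.castRingHom ℚ) F ∣ X i - C (x : ℚ))
    (hw : ∀ i, w i ≤ 1) {L : ℝ} (hL : 0 ≤ L) {v : ℝ} (hv : 0 ≤ v)
    {E : Finset (Fin 2 →₀ ℕ)} {g : ℕ} (hEg : E ⊆ exponentsOfDegreeLE (Fin 2) g)
    (hEF : ∀ G, G ≠ 0 → G.support ⊆ E → ¬ map (Int.castRingHom ℚ) F ∣ G)
    (hEcard : 2 ≤ #E) (hEw : ∑ e ∈ E, Finsupp.weight w e ≤ (#E).choose 2 * v)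
    {D k : ℕ} (hD : #(exponentsOfDegreeLE (Fin 2) d) = D) (hk : k ≠ 0)
    (hkv : ((d * D + d : ℕ) : ℝ) ≤ k * v) {A : ℝ} (hEA : ((#E).factorial : ℝ) < A)
    (hDA : (D : ℝ) ^ (D + 1) * d < A)
    (hZF : ∀ z ∈ Z, eval z F = 0) (hZP : ∀ z ∈ Z, ∀ i, |(z i : ℝ)| ≤ Real.exp (w i * L)) :
    (#Z : ℝ) ≤ (d * d + k * (d * g * (d * (2 ^ k * (A + 1))))) * Real.exp (v * L) := by
  set B := Real.exp (v * L) with hB_def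
  have hB : 1 ≤ B := Real.one_le_exp (by positivity)
  have hA : 1 ≤ A := le_trans (by exact_mod_cast (#E).factorial_pos) hEA.le
  obtain ⟨Q, hQ, hQAB, hQpow⟩ := exists_natCast_mul_pow_lt_pow hA hB
  have hprod : (#E).factorial * ∏ e ∈ E, ∏ i, Real.exp (w i * L) ^ e i <
      (Q : ℝ) ^ (#E).choose 2 := by
    refine lt_of_le_of_lt ?_ (hQpow _ hEA _ (Nat.choose_pos hEcard).ne')
    simp only [prod_exp_mul_pow]
    rw [← Real.exp_sum, ← sum_mul, hB_def, ← Real.exp_nat_mul, ← mul_assoc]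
    gcongr
  have hpow : D * ((D * Real.exp L ^ d) ^ D * d * Real.exp L ^ d) < (Q : ℝ) ^ k :=
    calc D * ((D * Real.exp L ^ d) ^ D * d * Real.exp L ^ d)
        = D ^ (D + 1) * d * Real.exp ((d * D + d : ℕ) * L) := by
          rw [Real.exp_nat_mul]
          ring
      _ ≤ D ^ (D + 1) * d * B ^ k := by
          rw [hB_def, ← Real.exp_nat_mul, ← mul_assoc]
          gcongr
      _ < (Q : ℝ) ^ k := hQpow _ hDA _ hk
  have hZ : #Z ≤ d * d + k * (d * g * (d * (2 ^ k * Q))) :=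
    card_le_of_forall_not_dvd hF hd hline hEg hEF hQ hprod (Real.one_le_exp hL)
      (fun i ↦ Real.exp_le_exp.mpr (mul_le_of_le_one_left hL (hw i))) hD hpow hZF hZP
  calc (#Z : ℝ) ≤ d * d + k * (d * g * (d * (2 ^ k * Q))) := by exact_mod_cast hZ
    _ ≤ d * d * B + k * (d * g * (d * (2 ^ k * ((A + 1) * B)))) := by
        have : (d : ℝ) * d ≤ d * d * B := le_mul_of_one_le_right (by positivity) hB
        gcongr
    _ = _ := by ring

theorem exists_card_le_mul_exp (d : ℕ) {ε : ℝ} (hε : 0 < ε) :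
    ∃ c : ℝ, 0 ≤ c ∧ ∀ F : MvPolynomial (Fin 2) ℤ, F.totalDegree = d →
      Irreducible (map (Int.castRingHom ℚ) F) →
      (∀ i (x : ℤ), ¬ map (Int.castRingHom ℚ) F ∣ X i - C (x : ℚ)) →
      ∀ w : Fin 2 → ℝ, (∀ i, w i ∈ Set.Icc ε 1) →
      ∀ τ ≠ 0, IsGreatest (Finsupp.weight w '' (F.support : Set (Fin 2 →₀ ℕ))) τ →
      ∀ L : ℝ, 0 ≤ L →
      ∀ Z : Finset (Fin 2 → ℤ), (∀ z ∈ Z, eval z F = 0) →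
        (∀ z ∈ Z, ∀ i, |(z i : ℝ)| ≤ Real.exp (w i * L)) →
        (#Z : ℝ) ≤ c * Real.exp ((w 0 * w 1 / τ + ε) * L) := by
  obtain ⟨R, hR⟩ := exists_exponents_avoiding d hε
  let S := #(exponentsOfDegreeLE (Fin 2) R)
  let D := #(exponentsOfDegreeLE (Fin 2) d)
  let k := ⌈((d * D + d : ℕ) : ℝ) / ε⌉₊ + 1
  let A : ℝ := S.factorial + D ^ (D + 1) * d + 1
  have hk : ((d * D + d : ℕ) : ℝ) ≤ k * ε := by
    rw [← div_le_iff₀ hε]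
    exact (Nat.le_ceil _).trans (by exact_mod_cast Nat.le_succ _)
  refine ⟨d * d + k * (d * R * (d * (2 ^ k * (A + 1)))), by positivity,
    fun F hd hF hline w hw τ hτ hmax L hL Z hZF hZP ↦ ?_⟩
  have hsupp : (map (Int.castRingHom ℚ) F).support = F.support :=
    support_map_of_injective _ (Int.castRingHom ℚ).injective_int
  obtain ⟨m, hm, hmw, hmF⟩ := exists_max_weight_forall_dvd w hF.ne_zero
  rw [hsupp] at hm hmw
  have hmτ : Finsupp.weight w m = τ := by
    refine le_antisymm (hmax.2 ⟨m, hm, rfl⟩) ?_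
    obtain ⟨e, he, rfl⟩ := hmax.1
    exact hmw e he
  have hm0 : m ≠ 0 := by
    rintro rfl
    exact hτ (by rw [← hmτ, map_zero])
  obtain ⟨E, hER, hEm, hEcard, hEw⟩ := hR w hw m hm0 (hd ▸ le_totalDegree hm)
  have hw0 (i) : 0 ≤ w i := hε.le.trans (hw i).1
  have hu : 0 ≤ w 0 * w 1 / Finsupp.weight w m := by
    rw [weight_fin_two]
    have := hw0 0
    have := hw0 1
    positivity
  have hES : ((#E).factorial : ℝ) ≤ S.factorial := by
    exact_mod_cast Nat.factorial_le (card_le_card hER)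
  have hDd : (0 : ℝ) ≤ D ^ (D + 1) * d := by positivity
  have hS : (0 : ℝ) ≤ S.factorial := by positivity
  rw [← hmτ]
  refine card_le_mul_exp_of_forall_not_dvd hF hd hline (fun i ↦ (hw i).2) hL (add_nonneg hu hε.le)
    hER (fun G hG hGE hFG ↦ ?_) hEcard hEw rfl (Nat.succ_ne_zero _) (hk.trans ?_)
    (by linarith) (by linarith) hZF hZP
  · obtain ⟨e, he, hme⟩ := hmF G hG hFG
    exact hEm e (hGE he) hme
  · gcongr
    exact le_add_of_nonneg_left hu

end BalancedBox

section Counting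

variable {d : ℕ} {F : MvPolynomial (Fin 2) ℤ} {Z : Finset (Fin 2 → ℤ)}

theorem abs_intCast_le_iff_mem_Icc {n : ℤ} {p : ℝ} : |(n : ℝ)| ≤ p ↔ n ∈ Icc (-⌊p⌋) ⌊p⌋ := by
  rw [mem_Icc, ← abs_le, Int.le_floor, Int.cast_abs]

theorem card_le_three_mul_of_forall_abs_le {s : Finset ℤ} {p : ℝ} (hp : 1 ≤ p)
    (hs : ∀ n ∈ s, |(n : ℝ)| ≤ p) : (#s : ℝ) ≤ 3 * p := by
  have hcard : #s ≤ #(Icc (-⌊p⌋) ⌊p⌋) :=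
    card_le_card fun n hn ↦ abs_intCast_le_iff_mem_Icc.mp (hs n hn)
  rw [Int.card_Icc] at hcard
  have hfloor : (0 : ℤ) ≤ ⌊p⌋ := Int.floor_nonneg.mpr (zero_le_one.trans hp)
  have hs' : (#s : ℝ) ≤ 2 * ⌊p⌋ + 1 := by exact_mod_cast (by lia : (#s : ℤ) ≤ 2 * ⌊p⌋ + 1)
  linarith [Int.floor_le p]

theorem card_le_of_forall_abs_apply_le (hF : Irreducible (map (Int.castRingHom ℚ) F))
    (hd : F.totalDegree = d) {i : Fin 2}
    (hline : ∀ x : ℤ, ¬ map (Int.castRingHom ℚ) F ∣ X i - C (x : ℚ)) {p : ℝ} (hp : 1 ≤ p)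
    (hZF : ∀ z ∈ Z, eval z F = 0) (hZP : ∀ z ∈ Z, |(z i : ℝ)| ≤ p) :
    (#Z : ℝ) ≤ 3 * d * p := by
  have hfiber : #Z ≤ d * #(Z.image (· i)) := card_le_mul_card_image Z d fun x _ ↦ hd ▸
    card_le_totalDegree_of_forall_apply_eq hF (hline x)
      (fun z hz ↦ hZF z (mem_filter.mp hz).1) (fun z hz ↦ (mem_filter.mp hz).2)
  have himage := card_le_three_mul_of_forall_abs_le hp (forall_mem_image.mpr hZP)
  calc (#Z : ℝ) ≤ d * #(Z.image (· i)) := by exact_mod_cast hfiber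
    _ ≤ d * (3 * p) := by gcongr
    _ = 3 * d * p := by ring

theorem eq_single_of_mem_support_of_dvd_X_sub_C {σ K : Type*} [Field K] {G : MvPolynomial σ K}
    (hG : G.totalDegree ≠ 0) {i : σ} {x : K} (hGX : G ∣ X i - C x) {e : σ →₀ ℕ}
    (he : e ∈ G.support) (he0 : e ≠ 0) : e = Finsupp.single i 1 := by
  classical
  have hdeg : (X i - C x).totalDegree ≤ 1 := (totalDegree_sub_C_le _ _).trans (totalDegree_X i).le
  have hne : X i - C x ≠ 0 := sub_ne_zero.mpr fun h ↦ by
    have := congrArg totalDegree h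
    simp at this
  obtain ⟨u, hu⟩ := associated_of_dvd_of_totalDegree_le hGX hne (hdeg.trans (by lia))
  obtain ⟨c, -, hc⟩ := isUnit_iff_eq_C_of_isReduced.mp u.isUnit
  rw [hc, mul_comm] at hu
  have hcoeff : coeff e (X i - C x) ≠ 0 := by
    have hc0 : c ≠ 0 := fun h ↦ hne (by rw [← hu, h, C_0, zero_mul])
    rw [← hu, coeff_C_mul]
    exact mul_ne_zero hc0 (mem_support_iff.mp he)
  by_contra hei
  exact hcoeff (by simp [coeff_X, coeff_C, he0.symm, Ne.symm hei])

theorem card_le_mul_exp_of_dvd_X_sub_C (hd : F.totalDegree ≠ 0) {i : Fin 2} {x : ℤ}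
    (hline : map (Int.castRingHom ℚ) F ∣ X i - C (x : ℚ)) {P : Fin 2 → ℝ} (hP : ∀ i, 1 ≤ P i)
    {e : Fin 2 →₀ ℕ} (he : e ∈ F.support) (hT : 1 < P 0 ^ e 0 * P 1 ^ e 1)
    (hZF : ∀ z ∈ Z, eval z F = 0) (hZP : ∀ z ∈ Z, ∀ i, |(z i : ℝ)| ≤ P i) :
    (#Z : ℝ) ≤ 3 * Real.exp (Real.log (P 0) * Real.log (P 1) /
      Real.log (P 0 ^ e 0 * P 1 ^ e 1)) := by
  obtain ⟨j, hij⟩ := exists_ne i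
  have hzi : ∀ z ∈ Z, z i = x := fun z hz ↦ by
    have := eval_intCast_eq_zero_of_eval_eq_zero (G := X i - C x)
      (by simpa using hline) (hZF z hz)
    simpa [sub_eq_zero] using this
  have hinj : Set.InjOn (fun z : Fin 2 → ℤ ↦ z j) Z := fun z hz z' hz' h ↦ by
    funext l
    obtain rfl | rfl : l = i ∨ l = j := by lia
    exacts [(hzi z hz).trans (hzi z' hz').symm, h]
  have he0 : e ≠ 0 := by
    rintro rfl
    simp at hT
  have hei : e = Finsupp.single i 1 := eq_single_of_mem_support_of_dvd_X_sub_C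
    (by rwa [totalDegree_map_of_injective (Int.castRingHom ℚ).injective_int]) hline
    (by rwa [support_map_of_injective _ (Int.castRingHom ℚ).injective_int]) he0
  have hTP : P 0 ^ e 0 * P 1 ^ e 1 = P i := by
    rw [hei]
    fin_cases i <;> simp
  have hlog : Real.log (P 0) * Real.log (P 1) = Real.log (P i) * Real.log (P j) := by
    fin_cases i <;> fin_cases j <;> simp_all [mul_comm]
  rw [hTP] at hT ⊢
  rw [hlog, mul_div_cancel_left₀ _ (Real.log_pos hT).ne', Real.exp_log (by linarith [hP j]),
    ← card_image_of_injOn hinj]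
  exact card_le_three_mul_of_forall_abs_le (hP j) (forall_mem_image.mpr fun z hz ↦ hZP z hz j)

theorem isGreatest_weight_log_div_log {P : Fin 2 → ℝ} (hP : ∀ i, 0 < P i) {M : ℝ} (hM : 1 < M)
    {T : ℝ} (hT : IsGreatest {x : ℝ | ∃ e ∈ F.support, x = P 0 ^ e 0 * P 1 ^ e 1} T) :
    IsGreatest (Finsupp.weight (fun i ↦ Real.log (P i) / Real.log M) ''
      (F.support : Set (Fin 2 →₀ ℕ))) (Real.log T / Real.log M) := by
  have hweight (e : Fin 2 →₀ ℕ) : Finsupp.weight (fun i ↦ Real.log (P i) / Real.log M) e =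
      Real.log (P 0 ^ e 0 * P 1 ^ e 1) / Real.log M := by
    rw [Real.log_mul (pow_pos (hP 0) _).ne' (pow_pos (hP 1) _).ne', Real.log_pow, Real.log_pow,
      weight_fin_two, add_div, mul_div_assoc, mul_div_assoc]
  have hlogM : 0 < Real.log M := Real.log_pos hM
  constructor
  · obtain ⟨e, he, rfl⟩ := hT.1
    exact ⟨e, he, hweight e⟩
  · rintro _ ⟨e, he, rfl⟩
    rw [hweight]
    have := hP 0
    have := hP 1
    gcongr
    exact hT.2 ⟨e, he, rfl⟩

theorem exists_card_le_of_forall_rpow_le (d : ℕ) {ε : ℝ} (hε : 0 < ε) :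
    ∃ c : ℝ, 0 ≤ c ∧ ∀ F : MvPolynomial (Fin 2) ℤ, F.totalDegree = d →
      Irreducible (map (Int.castRingHom ℚ) F) →
      (∀ i (x : ℤ), ¬ map (Int.castRingHom ℚ) F ∣ X i - C (x : ℚ)) →
      ∀ M > 1, ∀ P : Fin 2 → ℝ, (∀ i, P i ∈ Set.Icc (M ^ ε) M) → ∀ T > 1,
      IsGreatest {x : ℝ | ∃ e ∈ F.support, x = P 0 ^ e 0 * P 1 ^ e 1} T →
      ∀ Z : Finset (Fin 2 → ℤ), (∀ z ∈ Z, eval z F = 0) → (∀ z ∈ Z, ∀ i, |(z i : ℝ)| ≤ P i) →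
        (#Z : ℝ) ≤ c * M ^ ε * Real.exp (Real.log (P 0) * Real.log (P 1) / Real.log T) := by
  obtain ⟨c, hc, h⟩ := exists_card_le_mul_exp d hε
  refine ⟨c, hc, fun F hd hF hline M hM P hP T hT hmax Z hZF hZP ↦ ?_⟩
  have hM0 : 0 < M := zero_lt_one.trans hM
  have hP0 i : 0 < P i := (Real.rpow_pos_of_pos hM0 ε).trans_le (hP i).1
  have hlogM : 0 < Real.log M := Real.log_pos hM
  have hlogT : 0 < Real.log T := Real.log_pos hT
  let w : Fin 2 → ℝ := fun i ↦ Real.log (P i) / Real.log M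
  have hw : ∀ i, w i ∈ Set.Icc ε 1 := by
    refine fun i ↦ ⟨?_, div_le_one_of_le₀ (Real.log_le_log (hP0 i) (hP i).2) hlogM.le⟩
    rw [le_div_iff₀ hlogM, ← Real.log_rpow hM0]
    exact Real.log_le_log (by positivity) (hP i).1
  have hPw i : Real.exp (w i * Real.log M) = P i := by
    rw [div_mul_cancel₀ _ hlogM.ne', Real.exp_log (hP0 i)]
  have hexponent : (w 0 * w 1 / (Real.log T / Real.log M) + ε) * Real.log M =
      Real.log M * ε + Real.log (P 0) * Real.log (P 1) / Real.log T := by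
    simp only [w]
    field_simp
    ring
  have hZ := h F hd hF hline w hw _ (by positivity) (isGreatest_weight_log_div_log hP0 hM hmax) _
    hlogM.le Z hZF (by simpa only [hPw] using hZP)
  rwa [hexponent, Real.exp_add, ← Real.rpow_def_of_pos hM0, ← mul_assoc] at hZ

theorem one_lt_max_of_one_lt_pow_mul_pow {x y : ℝ} (hx : 0 ≤ x) (hy : 0 ≤ y) {m n : ℕ}
    (h : 1 < x ^ m * y ^ n) : 1 < max x y := by
  by_contra! hxy
  obtain ⟨hx1, hy1⟩ := max_le_iff.mp hxy
  exact h.not_ge (mul_le_one₀ (pow_le_one₀ hx hx1) (pow_nonneg hy n) (pow_le_one₀ hy hy1))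

theorem exists_card_zeros_le (hd : 1 ≤ d) {ε : ℝ} (hε : 0 < ε) :
    ∃ c : ℝ, ∀ F : MvPolynomial (Fin 2) ℤ, F.totalDegree = d →
      Irreducible (map (Int.castRingHom ℚ) F) →
      ∀ P : Fin 2 → ℝ, (∀ i, 1 ≤ P i) → ∀ T > 1,
      IsGreatest {x : ℝ | ∃ e ∈ F.support, x = P 0 ^ e 0 * P 1 ^ e 1} T →
      ∀ Z : Finset (Fin 2 → ℤ), (∀ z ∈ Z, eval z F = 0) → (∀ z ∈ Z, ∀ i, |(z i : ℝ)| ≤ P i) →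
        (#Z : ℝ) ≤ c * max (P 0) (P 1) ^ ε *
          Real.exp (Real.log (P 0) * Real.log (P 1) / Real.log T) := by
  obtain ⟨c, hc, hbal⟩ := exists_card_le_of_forall_rpow_le d hε
  refine ⟨3 * d + c, fun F hFd hF P hP T hT hmax Z hZF hZP ↦ ?_⟩
  set M := max (P 0) (P 1)
  set U := Real.exp (Real.log (P 0) * Real.log (P 1) / Real.log T) with hU_def
  have hPM i : P i ≤ M := by fin_cases i <;> simp [M]
  have hd1 : (1 : ℝ) ≤ d := by exact_mod_cast hd
  have hM : 1 ≤ M ^ ε := Real.one_le_rpow ((hP 0).trans (hPM 0)) hε.le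
  have hU : 1 ≤ U := Real.one_le_exp (div_nonneg
    (mul_nonneg (Real.log_nonneg (hP 0)) (Real.log_nonneg (hP 1))) (Real.log_pos hT).le)
  obtain ⟨e, he, hTe⟩ := hmax.1
  by_cases hline : ∀ i (x : ℤ), ¬ map (Int.castRingHom ℚ) F ∣ X i - C (x : ℚ)
  · by_cases hbalanced : ∀ i, M ^ ε ≤ P i
    · have hM1 : 1 < M := one_lt_max_of_one_lt_pow_mul_pow (zero_le_one.trans (hP 0))
        (zero_le_one.trans (hP 1)) (hTe ▸ hT)
      refine (hbal F hFd hF hline M hM1 P (fun i ↦ ⟨hbalanced i, hPM i⟩) T hT hmax Z hZF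
        hZP).trans ?_
      gcongr
      linarith
    · push Not at hbalanced
      obtain ⟨i, hi⟩ := hbalanced
      calc (#Z : ℝ) ≤ 3 * d * P i :=
            card_le_of_forall_abs_apply_le hF hFd (hline i) (hP i) hZF fun z hz ↦ hZP z hz i
        _ ≤ 3 * d * M ^ ε * 1 := by
            rw [mul_one]
            gcongr
        _ ≤ (3 * d + c) * M ^ ε * U := by
            gcongr
            linarith
  · push Not at hline
    obtain ⟨i, x, hx⟩ := hline
    calc (#Z : ℝ) ≤ 3 * 1 * U := by
          rw [mul_one, hU_def, hTe]
          exact card_le_mul_exp_of_dvd_X_sub_C (by lia) hx hP he (hTe ▸ hT) hZF hZP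
      _ ≤ (3 * d + c) * M ^ ε * U := by
          gcongr
          linarith

end Counting

end BombieriPila

/-- (Bombieri–Pila / Heath-Brown type bound) Let `F ∈ ℤ[X₁, X₂]` be of total degree `d ≥ 1`
and irreducible over `ℚ`, let `P₁, P₂ ≥ 1`, and let `T > 1` be the largest value of
`P₁^(e₁) · P₂^(e₂)` over all monomials `X₁^(e₁)X₂^(e₂)` occurring in `F` with nonzero
coefficient. Then the number of integer zeros `(x₁, x₂)` of `F` with `|x₁| ≤ P₁`, `|x₂| ≤ P₂`
is at most `O_{d,ε}(max(P₁,P₂)^ε · exp(log P₁ · log P₂ / log T))`. -/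
theorem count_integral_points_on_curve (d : ℕ) (hd : 1 ≤ d) (ε : ℝ) (hε : 0 < ε) :
    ∃ C : ℝ, ∀ F : MvPolynomial (Fin 2) ℤ,
      F.totalDegree = d →
      Irreducible (MvPolynomial.map (Int.castRingHom ℚ) F) →
      ∀ P₁ P₂ : ℝ, 1 ≤ P₁ → 1 ≤ P₂ →
      ∀ T : ℝ, 1 < T →
        IsGreatest {x : ℝ | ∃ e ∈ F.support, x = P₁ ^ (e 0) * P₂ ^ (e 1)} T →
        (Set.ncard {x : ℤ × ℤ |
            MvPolynomial.eval (fun i => if i = 0 then x.1 else x.2) F = 0 ∧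
            (|x.1| : ℝ) ≤ P₁ ∧ (|x.2| : ℝ) ≤ P₂} : ℝ)
          ≤ C * (max P₁ P₂) ^ ε * Real.exp (Real.log P₁ * Real.log P₂ / Real.log T) := by
  obtain ⟨C, hC⟩ := BombieriPila.exists_card_zeros_le hd hε
  refine ⟨C, fun F hFd hF P₁ P₂ hP₁ hP₂ T hT hmax ↦ ?_⟩
  let point (x : ℤ × ℤ) : Fin 2 → ℤ := fun i ↦ if i = 0 then x.1 else x.2
  have hpoint : point.Injective := fun x y h ↦ Prod.ext (congrFun h 0) (congrFun h 1)
  let Z : Finset (ℤ × ℤ) := {x ∈ .Icc (-⌊P₁⌋) ⌊P₁⌋ ×ˢ .Icc (-⌊P₂⌋) ⌊P₂⌋ |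
    MvPolynomial.eval (point x) F = 0}
  have hZ : {x : ℤ × ℤ | MvPolynomial.eval (point x) F = 0 ∧
      (|x.1| : ℝ) ≤ P₁ ∧ (|x.2| : ℝ) ≤ P₂} = Z := by
    ext x
    simp [Z, BombieriPila.abs_intCast_le_iff_mem_Icc, and_comm]
  rw [hZ, Set.ncard_coe_finset, ← Finset.card_image_of_injective _ hpoint]
  refine hC F hFd hF ![P₁, P₂] (by simp [hP₁, hP₂]) T hT hmax _
    (Finset.forall_mem_image.mpr fun x hx ↦ (hZ.ge hx).1)
    (Finset.forall_mem_image.mpr fun x hx ↦ Fin.forall_fin_two.mpr (hZ.ge hx).2)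
end

section
/- Let n ≥ 2 be an integer and ε > 0. Then there exists a constant C, depending only on n and ε, such that for every real H ≥ 1 the number of tuples (a_1, …, a_n) ∈ ℤ^n with |a_i| ≤ H for 1 ≤ i ≤ n such that the Galois group of the splitting field of X^n + a_1X^{n-1} + ⋯ + a_n over ℚ is not isomorphic to S_n is at most C·H^{n-1/2+ε}. -/
open Polynomial

/-!
If the Frobenius permutes the distinct roots of `f mod p` with the cycle type of `π`, so does some
element of the Galois group of `f`. Modulo `p` this happens for a proportion at least
`1 / (2 n ^ n)` of all monic polynomials of degree `n`: by linear independence of characters, the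
root vectors whose coordinates Frobenius permutes as `π` form an `𝔽_p`-space of dimension at least
`n`, and most of them have distinct coordinates. Hence the polynomials whose Galois group misses the
type `π` avoid a fixed proportion of the residues modulo each of the `≫ Q / log Q` primes up to
`Q ≍ √H`.

With respect to a Fejér weight modulo a multiple of these primes, reductions modulo two different
primes are exactly independent, so the number of primes at which `f` has type `π` has a variance
bounded by its mean `≫ Q / log Q`. Chebyshev's inequality leaves `O(H ^ n log Q / Q)` polynomials
for which this number vanishes. Finally, by Jordan's theorem, a subgroup of `Sₙ` meeting all
conjugacy classes is `Sₙ`.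
-/

theorem subgroup_eq_top_of_forall_exists_conj_mem {G : Type*} [Group G] [Finite G] (K : Subgroup G)
    (h : ∀ g : G, ∃ c : G, c⁻¹ * g * c ∈ K) : K = ⊤ := by
  classical
  have := Fintype.ofFinite G
  -- By Burnside's lemma the average number of fixed points on `G ⧸ K` is one; every `g` fixes some
  -- point, so every `g`, in particular `1`, fixes exactly one.
  have burnside := MulAction.sum_card_fixedBy_eq_card_orbits_mul_card_group G (G ⧸ K)
  have one_orbit : Fintype.card (MulAction.orbitRel.Quotient G (G ⧸ K)) = 1 :=
    Fintype.card_eq_one_iff_nonempty_unique.2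
      ((MulAction.pretransitive_iff_unique_quotient_of_nonempty G (G ⧸ K)).1 inferInstance)
  have one_le_card_fixedBy (g : G) : 1 ≤ Fintype.card (MulAction.fixedBy (G ⧸ K) g) := by
    obtain ⟨c, hc⟩ := h g
    refine Fintype.card_pos_iff.2 ⟨⟨(c : G ⧸ K), ?_⟩⟩
    rw [MulAction.mem_fixedBy, MulAction.Quotient.smul_coe, smul_eq_mul, eq_comm, QuotientGroup.eq]
    simpa [mul_assoc] using hc
  have card_fixedBy_one : 1 = Fintype.card (MulAction.fixedBy (G ⧸ K) (1 : G)) := by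
    refine (Finset.sum_eq_sum_iff_of_le fun g _ => one_le_card_fixedBy g).1 ?_ 1
      (Finset.mem_univ _)
    rw [burnside, one_orbit]
    simp
  refine QuotientGroup.subsingleton_iff.1 (Finite.card_le_one_iff_subsingleton.1 ?_)
  rw [Nat.card_eq_fintype_card, card_fixedBy_one]
  exact (Fintype.card_congr ((Equiv.setCongr (MulAction.fixedBy_one_eq_univ ..)).trans
    (Equiv.Set.univ _))).ge

section PermutesRootsAs

variable {A B ι : Type*} [CommRing A] [CommRing B] [Fintype ι]

/-- `PermutesRootsAs f σ π`: the polynomial `f` has `card ι` distinct roots, which can be labelled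
by `ι` in such a way that the map `σ` acts on them as the permutation `π` of the labels. The map
`σ` is a Galois automorphism in characteristic zero, and the Frobenius in characteristic `p`. -/
def PermutesRootsAs (f : A[X]) (σ : A → A) (π : Equiv.Perm ι) : Prop :=
  ∃ x : ι → A, Function.Injective x ∧ f = ∏ i, (X - C (x i)) ∧ ∀ i, σ (x i) = x (π i)

theorem isRoot_prod_X_sub_C_iff [IsDomain A] {x : ι → A} {r : A} :
    (∏ i, (X - C (x i))).IsRoot r ↔ ∃ i, x i = r := by
  simp only [isRoot_prod, Finset.mem_univ, true_and, root_X_sub_C]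

theorem map_prod_X_sub_C (φ : A →+* B) (x : ι → A) :
    (∏ i, (X - C (x i))).map φ = ∏ i, (X - C (φ (x i))) := by
  simp [Polynomial.map_prod]

theorem PermutesRootsAs.map {f : A[X]} {σ : A → A} {π : Equiv.Perm ι} (h : PermutesRootsAs f σ π)
    {φ : A →+* B} (hφ : Function.Injective φ) {τ : B → B} (hστ : ∀ a, φ (σ a) = τ (φ a)) :
    PermutesRootsAs (f.map φ) τ π := by
  obtain ⟨x, hx, rfl, hσ⟩ := h
  exact ⟨φ ∘ x, hφ.comp hx, map_prod_X_sub_C φ x, fun i => by simp [← hστ, hσ]⟩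

theorem PermutesRootsAs.of_map [IsDomain A] [IsDomain B] {f : A[X]} {α : ι → A}
    (hf : f = ∏ i, (X - C (α i))) {σ : A →+* A} (hσ : f.map σ = f) {φ : A →+* B} {τ : B → B}
    (hστ : ∀ a, φ (σ a) = τ (φ a)) {π : Equiv.Perm ι} (h : PermutesRootsAs (f.map φ) τ π) :
    PermutesRootsAs f σ π := by
  obtain ⟨x, hx, hfx, hτ⟩ := h
  have exists_lift (i : ι) : ∃ j, φ (α j) = x i := by
    rw [← isRoot_prod_X_sub_C_iff (x := fun j => φ (α j)), ← map_prod_X_sub_C, ← hf, hfx,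
      isRoot_prod_X_sub_C_iff]
    exact ⟨i, rfl⟩
  choose e he using exists_lift
  have e_bijective : Function.Bijective e :=
    Finite.injective_iff_bijective.1 fun i j hij => hx (by rw [← he, ← he, hij])
  have hfe : f = ∏ i, (X - C (α (e i))) :=
    hf.trans (e_bijective.prod_comp fun i => X - C (α i)).symm
  refine ⟨fun i => α (e i), fun i j hij => hx ?_, hfe, fun i => ?_⟩
  · simpa only [he] using congrArg φ hij
  · obtain ⟨k, hk⟩ : ∃ k, α (e k) = σ (α (e i)) := by
      rw [← isRoot_prod_X_sub_C_iff (x := fun k => α (e k)), ← hfe, ← hσ]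
      refine IsRoot.map ?_
      rw [hfe, isRoot_prod_X_sub_C_iff]
      exact ⟨i, rfl⟩
    rw [← hk, hx (by rw [← hτ, ← he k, hk, hστ, he] : x k = x (π i))]

theorem exists_eq_prod_X_sub_C {K : Type*} [Field K] {f : K[X]} (hf : f.Monic) (hs : f.Splits)
    (hd : f.natDegree = Fintype.card ι) : ∃ α : ι → K, f = ∏ i, (X - C (α i)) := by
  have hcard : Fintype.card ι = f.roots.toList.length := by
    rw [Multiset.length_toList, ← hd, hs.natDegree_eq_card_roots]
  let e : ι ≃ Fin f.roots.toList.length := Fintype.equivFinOfCardEq hcard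
  refine ⟨fun i => f.roots.toList.get (e i), ?_⟩
  rw [e.prod_comp fun j => X - C (f.roots.toList.get j)]
  conv_lhs => rw [hs.eq_prod_roots_of_monic hf, ← Multiset.coe_toList f.roots, Multiset.map_coe,
    Multiset.prod_coe, ← List.ofFn_get f.roots.toList, List.map_ofFn, List.prod_ofFn]
  rfl

end PermutesRootsAs

section Galois

variable {F ι : Type*} [Field F] [Fintype ι]

theorem exists_equiv_rootSet {K : Type*} [Field K] [Algebra F K] {f : F[X]} {x : ι → K}
    (hx : Function.Injective x) (hf : f.map (algebraMap F K) = ∏ i, (X - C (x i))) :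
    ∃ e : ι ≃ f.rootSet K, ∀ i, (e i : K) = x i := by
  have mem_rootSet_iff (r : K) : r ∈ f.rootSet K ↔ ∃ i, x i = r := by
    have hf0 : f.map (algebraMap F K) ≠ 0 := by
      rw [hf]; exact (monic_prod_X_sub_C x Finset.univ).ne_zero
    rw [← isRoot_prod_X_sub_C_iff, ← hf, IsRoot, eval_map_algebraMap, mem_rootSet_of_ne]
    rintro rfl
    simp at hf0
  refine ⟨Equiv.ofBijective (fun i => ⟨x i, (mem_rootSet_iff _).2 ⟨i, rfl⟩⟩)
    ⟨fun i j hij => hx (congrArg Subtype.val hij), ?_⟩, fun i => rfl⟩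
  rintro ⟨r, hr⟩
  obtain ⟨i, rfl⟩ := (mem_rootSet_iff r).1 hr
  exact ⟨i, rfl⟩

/-- `GalPermutesRootsAs f π`: some element of the Galois group of `f` has the cycle type of `π` as a
permutation of the roots of `f`, which are distinct and as many as the labels permuted by `π`. -/
def GalPermutesRootsAs (f : F[X]) (π : Equiv.Perm ι) : Prop :=
  ∃ σ : f.SplittingField ≃ₐ[F] f.SplittingField,
    PermutesRootsAs (f.map (algebraMap F f.SplittingField)) σ π

theorem nonempty_gal_mulEquiv_perm {f : F[X]} (h : ∀ π : Equiv.Perm ι, GalPermutesRootsAs f π) :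
    Nonempty (f.Gal ≃* Equiv.Perm ι) := by
  obtain ⟨-, α, hα, hf, -⟩ := h 1
  obtain ⟨e, -⟩ := exists_equiv_rootSet hα hf
  have : Fact ((f.map (algebraMap F f.SplittingField)).Splits) := ⟨SplittingField.splits f⟩
  let Φ : f.Gal →* Equiv.Perm ι :=
    e.symm.permCongrHom.toMonoidHom.comp (Gal.galActionHom f f.SplittingField)
  have Φ_injective : Function.Injective Φ :=
    e.symm.permCongrHom.injective.comp (Gal.galActionHom_injective f f.SplittingField)
  have range_Φ : Φ.range = ⊤ := by
    refine subgroup_eq_top_of_forall_exists_conj_mem _ fun π => ?_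
    obtain ⟨σ, β, hβ, hfβ, hσ⟩ := h π
    obtain ⟨e', he'⟩ := exists_equiv_rootSet hβ hfβ
    refine ⟨e.trans e'.symm, Gal.restrict f f.SplittingField σ, Equiv.ext fun i => ?_⟩
    change e.symm (Gal.galActionHom f f.SplittingField (Gal.restrict f f.SplittingField σ) (e i))
      = e.symm (e' (π (e'.symm (e i))))
    refine congrArg e.symm (Subtype.ext ?_)
    rw [Gal.galActionHom_restrict, he', ← hσ, ← he', Equiv.apply_symm_apply]
  exact ⟨MulEquiv.ofBijective Φ ⟨Φ_injective, MonoidHom.range_eq_top.1 range_Φ⟩⟩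

end Galois

section FrobeniusLift

theorem nonempty_algHom_of_isIntegral (R S Ω : Type*) [CommRing R] [CommRing S] [IsDomain S]
    [Algebra R S] [Algebra.IsIntegral R S] [FaithfulSMul R S] [Field Ω] [IsAlgClosed Ω]
    [Algebra R Ω] : Nonempty (S →ₐ[R] Ω) := by
  have := RingHom.ker_isPrime (algebraMap R Ω)
  obtain ⟨Q, hQ, hQR⟩ := Ideal.exists_ideal_over_prime_of_isIntegral_of_isDomain (S := S)
    (RingHom.ker (algebraMap R Ω))
    (by rw [(RingHom.injective_iff_ker_eq_bot _).1 (FaithfulSMul.algebraMap_injective R S)]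
        exact bot_le)
  let := (Ideal.Quotient.lift (Q.under R) (algebraMap R Ω) fun a ha => hQR.le ha).toAlgebra
  have : Module.IsTorsionFree (R ⧸ Q.under R) Ω := Module.isTorsionFree_iff_algebraMap_injective.2
    (RingHom.lift_injective_of_ker_le_ideal _ _ hQR.ge)
  have : Module.IsTorsionFree (R ⧸ Q.under R) (S ⧸ Q) :=
    Module.isTorsionFree_iff_algebraMap_injective.2 Ideal.algebraMap_quotient_injective
  have : IsScalarTower R (R ⧸ Q.under R) Ω := .of_algebraMap_eq fun _ => rfl
  let ψ : S ⧸ Q →ₐ[R ⧸ Q.under R] Ω := IsAlgClosed.lift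
  exact ⟨(ψ.restrictScalars R).comp (Ideal.Quotient.mkₐ R Q)⟩

theorem exists_map_smul_eq_pow_card (R S G Ω : Type*) [CommRing R] [CommRing S] [IsDomain S]
    [Algebra R S] [Module.Finite R S] [FaithfulSMul R S] [Group G] [Finite G]
    [MulSemiringAction G S] [SMulCommClass G R S] [Algebra.IsInvariant R S G] [Field Ω]
    [IsAlgClosed Ω] [Algebra R Ω] [Finite (algebraMap R Ω).range] :
    ∃ (φ : S →ₐ[R] Ω) (σ : G), ∀ x, φ (σ • x) = φ x ^ Nat.card (algebraMap R Ω).range := by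
  have := Algebra.IsInvariant.isIntegral R S G
  obtain ⟨φ⟩ := nonempty_algHom_of_isIntegral R S Ω
  let Q := RingHom.ker φ
  have : Q.IsPrime := RingHom.ker_isPrime φ
  have under_eq : Q.under R = RingHom.ker (algebraMap R Ω) := by
    ext r
    simp [Q, Ideal.under, RingHom.mem_ker]
  let residueEquiv : R ⧸ Q.under R ≃ (algebraMap R Ω).range :=
    ((Ideal.quotEquivOfEq under_eq).trans
      (RingHom.quotientKerEquivRange (algebraMap R Ω))).toEquiv
  have : Finite (R ⧸ Q.under R) := .of_equiv _ residueEquiv.symm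
  have : Finite (S ⧸ Q) := Module.finite_of_finite (R ⧸ Q.under R)
  obtain ⟨σ, hσ⟩ := IsArithFrobAt.exists_of_isInvariant R G Q
  refine ⟨φ, σ, fun x => ?_⟩
  rw [← Nat.card_congr residueEquiv, ← map_pow, ← sub_eq_zero, ← map_sub]
  exact Ideal.Quotient.eq.1 (hσ.mk_apply x)

theorem PermutesRootsAs.exists_algEquiv (R F : Type*) {K Ω ι : Type*} [CommRing R] [IsDomain R]
    [IsIntegrallyClosed R] [IsNoetherianRing R] [Field F] [Algebra R F] [IsFractionRing R F]
    [Field K] [Algebra F K] [FiniteDimensional F K] [IsGalois F K] [Algebra R K]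
    [IsScalarTower R F K] [Field Ω] [IsAlgClosed Ω] [Algebra R Ω] [Finite (algebraMap R Ω).range]
    [Fintype ι] {f : R[X]} (hf : f.Monic) (hd : f.natDegree = Fintype.card ι)
    (hs : (f.map (algebraMap R K)).Splits) {π : Equiv.Perm ι}
    (h : PermutesRootsAs (f.map (algebraMap R Ω)) (· ^ Nat.card (algebraMap R Ω).range) π) :
    ∃ σ : K ≃ₐ[F] K, PermutesRootsAs (f.map (algebraMap R K)) σ π := by
  let S := integralClosure R K
  have := IsIntegralClosure.finite R F K S
  have := integralClosure.isFractionRing_of_finite_extension (A := R) F K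
  have := Algebra.isInvariant_of_isGalois' R F K S
  have : Finite (S ≃ₐ[R] S) := .of_equiv _ (galRestrict R F K S).toEquiv
  have : FaithfulSMul R K := .trans R F K
  obtain ⟨φ, σ, hσ⟩ := exists_map_smul_eq_pow_card R S (S ≃ₐ[R] S) Ω
  obtain ⟨α, hα⟩ := exists_eq_prod_X_sub_C (ι := ι) (hf.map _) hs (by rw [hf.natDegree_map, hd])
  have α_integral (i : ι) : IsIntegral R (α i) := by
    refine ⟨f, hf, ?_⟩
    rw [← eval_map, hα]
    exact isRoot_prod_X_sub_C_iff.2 ⟨i, rfl⟩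
  have hfS : f.map (algebraMap R S) = ∏ i, (X - C (⟨α i, α_integral i⟩ : S)) := by
    apply map_injective (algebraMap S K) (FaithfulSMul.algebraMap_injective _ _)
    rw [map_map, ← IsScalarTower.algebraMap_eq, hα, map_prod_X_sub_C]
    rfl
  have map_σ : (f.map (algebraMap R S)).map (σ : S →+* S) = f.map (algebraMap R S) := by
    rw [map_map]
    exact congrArg f.map (RingHom.ext σ.commutes)
  have hS : PermutesRootsAs (f.map (algebraMap R S)) σ π := by
    refine PermutesRootsAs.of_map hfS (σ := (σ : S →+* S)) map_σ (φ := (φ : S →+* Ω)) hσ ?_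
    rwa [map_map, φ.comp_algebraMap]
  refine ⟨(galRestrict R F K S).symm σ, ?_⟩
  rw [IsScalarTower.algebraMap_eq R S K, ← map_map]
  exact hS.map (FaithfulSMul.algebraMap_injective S K) fun a =>
    (galRestrict_symm_algebraMap_apply R F σ a).symm

theorem PermutesRootsAs.galPermutesRootsAs {R Ω ι : Type*} (F : Type*) [CommRing R] [IsDomain R]
    [IsIntegrallyClosed R] [IsNoetherianRing R] [Field F] [PerfectField F] [Algebra R F]
    [IsFractionRing R F] [Field Ω] [IsAlgClosed Ω] [Algebra R Ω] [Finite (algebraMap R Ω).range]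
    [Fintype ι] {f : R[X]} (hf : f.Monic) (hd : f.natDegree = Fintype.card ι) {π : Equiv.Perm ι}
    (h : PermutesRootsAs (f.map (algebraMap R Ω)) (· ^ Nat.card (algebraMap R Ω).range) π) :
    GalPermutesRootsAs (f.map (algebraMap R F)) π := by
  have : IsGalois F (f.map (algebraMap R F)).SplittingField := {}
  have := SplittingField.splits (f.map (algebraMap R F))
  rw [GalPermutesRootsAs]
  rw [map_map, ← IsScalarTower.algebraMap_eq] at this ⊢
  exact h.exists_algEquiv R F hf hd this

theorem card_range_algebraMap_int (p : ℕ) [NeZero p] (Ω : Type*) [CommRing Ω] [CharP Ω p] :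
    Nat.card (algebraMap ℤ Ω).range = p := by
  have ker_eq : RingHom.ker (algebraMap ℤ Ω) = Ideal.span {(p : ℤ)} := by
    ext a
    simp [RingHom.mem_ker, CharP.intCast_eq_zero_iff Ω p, Ideal.mem_span_singleton]
  rw [← Nat.card_congr (RingHom.quotientKerEquivRange (algebraMap ℤ Ω)).toEquiv, ker_eq]
  simpa using Int.card_ideal_quot p

theorem PermutesRootsAs.galPermutesRootsAs_int {Ω ι : Type*} [Field Ω] [IsAlgClosed Ω] [Fintype ι]
    {f : ℤ[X]} (hf : f.Monic) (hd : f.natDegree = Fintype.card ι) {p : ℕ} [CharP Ω p] [NeZero p]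
    {π : Equiv.Perm ι} (h : PermutesRootsAs (f.map (Int.castRingHom Ω)) (· ^ p) π) :
    GalPermutesRootsAs (f.map (Int.castRingHom ℚ)) π := by
  have card_range := card_range_algebraMap_int p Ω
  have : Finite (algebraMap ℤ Ω).range :=
    Nat.finite_of_card_ne_zero (card_range.trans_ne (NeZero.ne p))
  exact PermutesRootsAs.galPermutesRootsAs ℚ (Ω := Ω) hf hd (by rwa [card_range])

end FrobeniusLift

section TwistedFixedSpace

variable {F L ι : Type*} [Field F] [Field L] [Algebra F L]

/-- The `F`-space of vectors on which the automorphism `σ`, applied coordinatewise, acts as the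
permutation `π` of the coordinates. For the Frobenius `σ` of a finite field it consists of the
root vectors of the polynomials over `F` whose Frobenius permutes the roots as `π`. -/
def twistedFixedSpace (σ : L ≃ₐ[F] L) (π : Equiv.Perm ι) : Submodule F (ι → L) where
  carrier := {x | ∀ i, σ (x i) = x (π i)}
  add_mem' hx hy i := by simp only [Pi.add_apply, map_add, hx i, hy i]
  zero_mem' i := by simp
  smul_mem' c x hx i := by simp only [Pi.smul_apply, map_smul, hx i]

theorem sum_pow_mem_twistedFixedSpace {σ : L ≃ₐ[F] L} {π : Equiv.Perm ι} {m : ℕ} (hσ : σ ^ m = 1)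
    (hπ : π ^ m = 1) (y : ι → L) :
    (fun i => ∑ k ∈ Finset.range m, (σ ^ k) (y ((π ^ k).symm i))) ∈ twistedFixedSpace σ π := by
  intro i
  have shift (k : ℕ) : σ ((σ ^ k) (y ((π ^ k).symm i)))
      = (σ ^ (k + 1)) (y ((π ^ (k + 1)).symm (π i))) := by
    rw [pow_succ' σ, AlgEquiv.mul_apply]
    rw [show (π ^ k).symm i = (π ^ (k + 1)).symm (π i) by
      rw [Equiv.eq_symm_apply, pow_succ', Equiv.Perm.mul_apply, Equiv.apply_symm_apply]]
  let term (k : ℕ) : L := (σ ^ k) (y ((π ^ k).symm (π i)))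
  change σ (∑ k ∈ Finset.range m, _) = ∑ k ∈ Finset.range m, term k
  rw [map_sum, Finset.sum_congr rfl fun k _ => shift k, ← add_left_inj (term 0),
    ← Finset.sum_range_succ' term, Finset.sum_range_succ]
  simp only [term, hσ, hπ, pow_zero]

theorem exists_mem_ne_of_span_eq_top {V : Submodule F (ι → L)}
    (hV : Submodule.span L (V : Set (ι → L)) = ⊤) {i j : ι} (hij : i ≠ j) : ∃ x ∈ V, x i ≠ x j := by
  classical
  by_contra! h
  have le_eqLocus : Submodule.span L (V : Set (ι → L)) ≤
      LinearMap.eqLocus (LinearMap.proj i : (ι → L) →ₗ[L] L) (LinearMap.proj j) :=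
    Submodule.span_le.2 h
  have single_mem : Pi.single i 1 ∈ Submodule.span L (V : Set (ι → L)) := hV ▸ Submodule.mem_top
  have : (Pi.single i 1 : ι → L) i = (Pi.single i 1 : ι → L) j := le_eqLocus single_mem
  simp [hij.symm] at this

theorem eq_zero_of_sum_mul_eq_zero_of_mem_twistedFixedSpace [Fintype ι] {σ : L ≃ₐ[F] L}
    (hσ : IsOfFinOrder σ) {π : Equiv.Perm ι} (hπ : π ^ orderOf σ = 1) {c : ι → L}
    (hc : ∀ x ∈ twistedFixedSpace σ π, ∑ i, c i * x i = 0) : c = 0 := by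
  classical
  funext j
  have independent : LinearIndependent L
      fun k : Fin (orderOf σ) => (((σ ^ (k : ℕ) : L ≃ₐ[F] L) : L →* L) : L → L) := by
    refine (linearIndependent_monoidHom L L).comp _ fun k l hkl => ?_
    exact Fin.ext (pow_injOn_Iio_orderOf k.2 l.2 (AlgEquiv.ext fun a => DFunLike.congr_fun hkl a))
  have relation (a : L) :
      ∑ k ∈ Finset.range (orderOf σ), c ((π ^ k) j) * (σ ^ k) a = 0 := by
    rw [← hc _ (sum_pow_mem_twistedFixedSpace (pow_orderOf_eq_one σ) hπ (Pi.single j a))]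
    simp only [Finset.mul_sum]
    rw [Finset.sum_comm]
    refine Finset.sum_congr rfl fun k _ => ?_
    rw [Finset.sum_eq_single ((π ^ k) j)]
    · rw [Equiv.symm_apply_apply, Pi.single_eq_same]
    · intro i _ hi
      rw [Pi.single_eq_of_ne (by rwa [Ne, Equiv.symm_apply_eq]), map_zero, mul_zero]
    · simp
  refine Fintype.linearIndependent_iff.1 independent (fun k => c ((π ^ (k : ℕ)) j)) ?_
    ⟨0, hσ.orderOf_pos⟩
  funext a
  simpa [Finset.sum_range] using relation a

theorem span_twistedFixedSpace_eq_top [Finite ι] {σ : L ≃ₐ[F] L} (hσ : IsOfFinOrder σ)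
    {π : Equiv.Perm ι} (hπ : π ^ orderOf σ = 1) :
    Submodule.span L (twistedFixedSpace σ π : Set (ι → L)) = ⊤ := by
  classical
  have := Fintype.ofFinite ι
  by_contra h
  obtain ⟨f, hf, hle⟩ := Submodule.exists_le_ker_of_lt_top _ (lt_top_iff_ne_top.2 h)
  refine hf (LinearMap.pi_ext' fun i => LinearMap.ext_ring ?_)
  refine congrFun (eq_zero_of_sum_mul_eq_zero_of_mem_twistedFixedSpace hσ hπ
    (c := fun i => f (Pi.single i 1)) fun x hx => ?_) i
  have fx_eq_zero : f x = 0 := hle (Submodule.subset_span hx)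
  rw [LinearMap.pi_apply_eq_sum_univ] at fx_eq_zero
  simpa [mul_comm, ← Pi.single_apply, Pi.single_comm] using fx_eq_zero

theorem card_le_finrank_of_span_eq_top [Fintype ι] [FiniteDimensional F L]
    {V : Submodule F (ι → L)} (hV : Submodule.span L (V : Set (ι → L)) = ⊤) :
    Fintype.card ι ≤ Module.finrank F V := by
  let b := Module.finBasis F V
  have span_eq_top : Submodule.span L (Set.range fun k => (b k : ι → L)) = ⊤ := by
    rw [eq_top_iff, ← hV, Submodule.span_le]
    intro x hx
    refine Submodule.span_subset_span F L _ ?_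
    rw [show (Set.range fun k => (b k : ι → L)) = V.subtype '' Set.range b by
      rw [← Set.range_comp]; rfl, Submodule.span_image, b.span_eq]
    simpa using hx
  have := finrank_range_le_card (R := L) fun k => (b k : ι → L)
  rwa [Set.finrank, span_eq_top, finrank_top, Module.finrank_fintype_fun_eq_card,
    Fintype.card_fin] at this

end TwistedFixedSpace

section Counting

variable {F L ι : Type*} [Field F] [Finite F]

theorem card_mul_card_le_of_ne_top {V : Type*} [AddCommGroup V] [Module F V] [Finite V]
    {U : Submodule F V} (hU : U ≠ ⊤) : Nat.card F * Nat.card U ≤ Nat.card V := by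
  rw [Module.natCard_eq_pow_finrank (K := F) (V := U),
    Module.natCard_eq_pow_finrank (K := F) (V := V), ← pow_succ']
  exact Nat.pow_le_pow_right Nat.card_pos (Submodule.finrank_lt hU)

theorem card_mul_ncard_iUnion_le {V κ : Type*} [AddCommGroup V] [Module F V] [Finite V] [Fintype κ]
    {U : κ → Submodule F V} (hU : ∀ s, U s ≠ ⊤) :
    Nat.card F * (⋃ s, (U s : Set V)).ncard ≤ Fintype.card κ * Nat.card V :=
  calc Nat.card F * (⋃ s, (U s : Set V)).ncard
    _ ≤ Nat.card F * ∑ s, Nat.card (U s) :=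
      Nat.mul_le_mul_left _ (Set.ncard_iUnion_le_of_fintype _)
    _ = ∑ s, Nat.card F * Nat.card (U s) := Finset.mul_sum ..
    _ ≤ ∑ _s : κ, Nat.card V := Finset.sum_le_sum fun s _ => card_mul_card_le_of_ne_top (hU s)
    _ = Fintype.card κ * Nat.card V := by simp

theorem card_le_two_mul_ncard_injective [Fintype ι] [Field L] [Finite L] [Algebra F L]
    {V : Submodule F (ι → L)} (hV : ∀ i j, i ≠ j → ∃ x ∈ V, x i ≠ x j)
    (hF : 2 * Fintype.card ι ^ 2 ≤ Nat.card F) :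
    Nat.card V ≤ 2 * {x : V | Function.Injective (x : ι → L)}.ncard := by
  classical
  let coordinatesEq (s : {s : ι × ι // s.1 ≠ s.2}) : Submodule F V :=
    (LinearMap.eqLocus (LinearMap.proj s.1.1 : (ι → L) →ₗ[F] L) (LinearMap.proj s.1.2)).comap
      V.subtype
  have coordinatesEq_ne_top (s) : coordinatesEq s ≠ ⊤ := fun htop => by
    obtain ⟨x, hx, hne⟩ := hV _ _ s.2
    exact hne (htop ▸ Submodule.mem_top : (⟨x, hx⟩ : V) ∈ coordinatesEq s)
  have injective_eq_compl : {x : V | Function.Injective (x : ι → L)}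
      = (⋃ s, (coordinatesEq s : Set V))ᶜ := by
    ext x
    simp only [Set.mem_ofPred_eq, Set.mem_compl_iff, Set.mem_iUnion, not_exists, Subtype.forall,
      Prod.forall]
    exact forall₂_congr fun i j => not_imp_not.symm
  have card_pairs : Fintype.card {s : ι × ι // s.1 ≠ s.2} ≤ Fintype.card ι ^ 2 :=
    (Fintype.card_subtype_le _).trans_eq (by simp [sq])
  have union_le := card_mul_ncard_iUnion_le coordinatesEq_ne_top
  have add_compl := Set.ncard_add_ncard_compl (⋃ s, (coordinatesEq s : Set V))
  rw [injective_eq_compl]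
  have two_mul_union_le : 2 * (⋃ s, (coordinatesEq s : Set V)).ncard ≤ Nat.card V := by
    refine Nat.le_of_mul_le_mul_left ?_ (Nat.card_pos (α := F))
    nlinarith
  omega

end Counting

section MonicOfCoeffs

variable {R S : Type*} [CommRing R] [CommRing S] {n : ℕ}

/-- The monic polynomial of degree `n` whose lower coefficients are, from the top down, the entries
of `a`. -/
noncomputable def monicOfCoeffs (a : Fin n → R) : R[X] :=
  X ^ n + ∑ i : Fin n, C (a i) * X ^ (n - 1 - (i : ℕ))

theorem map_monicOfCoeffs (φ : R →+* S) (a : Fin n → R) :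
    (monicOfCoeffs a).map φ = monicOfCoeffs (φ ∘ a) := by
  simp [monicOfCoeffs, Polynomial.map_sum]

theorem degree_sum_C_mul_X_pow_lt (a : Fin n → R) :
    (∑ i : Fin n, C (a i) * X ^ (n - 1 - (i : ℕ))).degree < (n : WithBot ℕ) := by
  rw [degree_lt_iff_coeff_zero]
  intro m hm
  rw [finsetSum_coeff]
  refine Finset.sum_eq_zero fun i _ => ?_
  rw [coeff_C_mul, coeff_X_pow, if_neg (by lia), mul_zero]

theorem monic_monicOfCoeffs (a : Fin n → R) : (monicOfCoeffs a).Monic :=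
  monic_X_pow_add (degree_sum_C_mul_X_pow_lt a)

theorem natDegree_monicOfCoeffs [Nontrivial R] (a : Fin n → R) :
    (monicOfCoeffs a).natDegree = n := by
  refine natDegree_eq_of_degree_eq_some ?_
  rw [monicOfCoeffs, degree_add_eq_left_of_degree_lt, degree_X_pow]
  rw [degree_X_pow]
  exact degree_sum_C_mul_X_pow_lt a

theorem monicOfCoeffs_coeff {f : R[X]} (hf : f.Monic) (hd : f.natDegree = n) :
    monicOfCoeffs (fun i : Fin n => f.coeff (n - 1 - (i : ℕ))) = f := by
  conv_rhs => rw [hf.as_sum, hd]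
  rw [monicOfCoeffs, ← Finset.sum_range_reflect,
    ← Finset.sum_range fun i => C (f.coeff (n - 1 - i)) * X ^ (n - 1 - i)]

end MonicOfCoeffs

section FrobeniusCount

variable {F L ι : Type*} [Field F] [Field L] [Algebra F L]

theorem exists_map_monicOfCoeffs_eq [FiniteDimensional F L] [IsGalois F L] {σ : L ≃ₐ[F] L}
    (hσ : Subgroup.zpowers σ = ⊤) {n : ℕ} {π : Equiv.Perm (Fin n)} {x : Fin n → L}
    (hx : x ∈ twistedFixedSpace σ π) :
    ∃ b : Fin n → F, (monicOfCoeffs b).map (algebraMap F L) = ∏ i, (X - C (x i)) := by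
  let f : L[X] := ∏ i, (X - C (x i))
  have map_σ : f.map (σ : L →+* L) = f := by
    rw [map_prod_X_sub_C]
    exact (Finset.prod_congr rfl fun i _ => congrArg (fun y => X - C y) (hx i)).trans
      (Equiv.prod_comp π fun i => X - C (x i))
  have coeff_fixed (k : ℕ) (τ : L ≃ₐ[F] L) : τ (f.coeff k) = f.coeff k := by
    have σ_mem : σ ∈ MulAction.stabilizer (L ≃ₐ[F] L) (f.coeff k) :=
      (coeff_map (σ : L →+* L) k).symm.trans (congrArg (fun g : L[X] => g.coeff k) map_σ)
    exact Subgroup.zpowers_le.2 σ_mem (hσ ▸ Subgroup.mem_top τ)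
  choose c hc using fun k => (IsGalois.mem_range_algebraMap_iff_fixed _).2 (coeff_fixed k)
  refine ⟨fun i => c (n - 1 - i), ?_⟩
  rw [map_monicOfCoeffs, ← monicOfCoeffs_coeff (monic_prod_X_sub_C x Finset.univ)
    ((natDegree_finsetProd_X_sub_C_eq_card ..).trans (Finset.card_fin n))]
  exact congrArg monicOfCoeffs (funext fun i => hc _)

theorem card_le_of_forall_eq_prod_X_sub_C [Fintype ι] {f : L[X]} {s : Finset (ι → L)}
    (hs : ∀ x ∈ s, f = ∏ i, (X - C (x i))) : s.card ≤ Fintype.card ι ^ Fintype.card ι := by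
  classical
  obtain rfl | ⟨y, hy⟩ := s.eq_empty_or_nonempty
  · simp
  have subset_piFinset : s ⊆ Fintype.piFinset fun _ => Finset.univ.image y := by
    intro x hx
    rw [Fintype.mem_piFinset]
    intro i
    simp only [Finset.mem_image, Finset.mem_univ, true_and]
    rw [← isRoot_prod_X_sub_C_iff, ← hs y hy, hs x hx, isRoot_prod_X_sub_C_iff]
    exact ⟨i, rfl⟩
  calc s.card
    _ ≤ (Finset.univ.image y).card ^ Fintype.card ι := by
      simpa [Fintype.card_piFinset] using Finset.card_le_card subset_piFinset
    _ ≤ Fintype.card ι ^ Fintype.card ι := Nat.pow_le_pow_left Finset.card_image_le _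

theorem ncard_injective_twistedFixedSpace_le [Finite L] {σ : L ≃ₐ[F] L}
    (hσ : Subgroup.zpowers σ = ⊤) {n : ℕ} (π : Equiv.Perm (Fin n)) :
    {x : twistedFixedSpace σ π | Function.Injective (x : Fin n → L)}.ncard ≤ n ^ n *
      {b : Fin n → F | PermutesRootsAs ((monicOfCoeffs b).map (algebraMap F L)) σ π}.ncard := by
  classical
  have : Finite F := Finite.of_injective _ (algebraMap F L).injective
  choose b hb using fun x : twistedFixedSpace σ π => exists_map_monicOfCoeffs_eq hσ x.2
  let s := (Set.toFinite {x : twistedFixedSpace σ π | Function.Injective (x : Fin n → L)}).toFinset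
  have fiber_card_le (c : Fin n → F) : {x ∈ s | b x = c}.card ≤ n ^ n := by
    rw [← Finset.card_image_of_injective _ (Subtype.val_injective)]
    simpa using card_le_of_forall_eq_prod_X_sub_C (f := (monicOfCoeffs c).map (algebraMap F L))
      (s := ({x ∈ s | b x = c}).image Subtype.val) (by
        simp only [Finset.mem_image, Finset.mem_filter]
        rintro _ ⟨x, ⟨-, rfl⟩, rfl⟩
        exact hb x)
  rw [Set.ncard_eq_toFinset_card _ (Set.toFinite _)]
  refine (Finset.card_le_mul_card_image s _ fun c _ => fiber_card_le c).trans
    (Nat.mul_le_mul_left _ ?_)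
  rw [← Set.ncard_coe_finset]
  refine Set.ncard_le_ncard ?_ (Set.toFinite _)
  simp only [Finset.coe_image, Set.image_subset_iff]
  intro x hx
  exact ⟨x, by simpa [s] using hx, hb x, x.2⟩

theorem card_pow_le_ncard_permutesRootsAs_frobenius {F : Type*} [Field F] [Fintype F] {n : ℕ}
    (π : Equiv.Perm (Fin n)) (hF : 2 * n ^ 2 ≤ Fintype.card F) :
    Fintype.card F ^ n ≤ 2 * n ^ n * {b : Fin n → F | PermutesRootsAs
      ((monicOfCoeffs b).map (algebraMap F (AlgebraicClosure F)))
      (· ^ Fintype.card F) π}.ncard := by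
  obtain ⟨p, _⟩ := CharP.exists F
  have : Fact p.Prime := ⟨CharP.char_is_prime F p⟩
  have : NeZero (orderOf π) := ⟨(orderOf_pos π).ne'⟩
  let L := FiniteField.Extension F p (orderOf π)
  let σ : L ≃ₐ[F] L := FiniteField.frobeniusAlgEquivOfAlgebraic F L
  have orderOf_σ : orderOf σ = orderOf π :=
    (FiniteField.orderOf_frobeniusAlgEquivOfAlgebraic F L).trans
      (FiniteField.finrank_extension F p (orderOf π))
  have zpowers_σ : Subgroup.zpowers σ = ⊤ := by
    rw [← Subgroup.card_eq_iff_eq_top, Nat.card_zpowers, orderOf_σ]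
    exact (FiniteField.natCard_algEquiv_extension F p (orderOf π)).symm
  have span_eq_top := span_twistedFixedSpace_eq_top (isOfFinOrder_of_finite σ)
    (π := π) (by rw [orderOf_σ, pow_orderOf_eq_one])
  have card_pow_le : Fintype.card F ^ n ≤ Nat.card (twistedFixedSpace σ π) := by
    rw [Module.natCard_eq_pow_finrank (K := F), Nat.card_eq_fintype_card]
    refine Nat.pow_le_pow_right Fintype.card_pos ?_
    simpa using card_le_finrank_of_span_eq_top span_eq_top
  let φ : L →ₐ[F] AlgebraicClosure F := IsAlgClosed.lift
  have transport (b : Fin n → F)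
      (h : PermutesRootsAs ((monicOfCoeffs b).map (algebraMap F L)) σ π) :
      PermutesRootsAs ((monicOfCoeffs b).map (algebraMap F (AlgebraicClosure F)))
        (· ^ Fintype.card F) π := by
    rw [← φ.comp_algebraMap, ← Polynomial.map_map]
    exact h.map φ.injective fun a => map_pow φ a _
  calc Fintype.card F ^ n
    _ ≤ Nat.card (twistedFixedSpace σ π) := card_pow_le
    _ ≤ 2 * {x : twistedFixedSpace σ π | Function.Injective (x : Fin n → L)}.ncard :=
      card_le_two_mul_ncard_injective (fun i j => exists_mem_ne_of_span_eq_top span_eq_top)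
        (by simpa using hF)
    _ ≤ 2 * (n ^ n * _) := Nat.mul_le_mul_left _ (ncard_injective_twistedFixedSpace_le zpowers_σ π)
    _ ≤ 2 * (n ^ n * _) := by
      gcongr
      · exact Set.toFinite _
      · exact transport _
    _ = _ := (mul_assoc ..).symm

end FrobeniusCount

section FejerWeight

theorem sum_addChar_fiber_eq_zero {G H R : Type*} [AddCommGroup G] [Fintype G] [AddCommGroup H]
    [DecidableEq H] [CommRing R] [IsDomain R] {ψ : AddChar G R} (ρ : G →+ H) {k : G} (hk : ρ k = 0)
    (hψ : ψ k ≠ 1) (r : H) : ∑ a with ρ a = r, ψ a = 0 := by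
  refine eq_zero_of_mul_eq_self_left hψ ?_
  rw [Finset.mul_sum]
  exact Finset.sum_equiv (Equiv.addLeft k) (by simp [hk]) fun a _ => (ψ.map_add_eq_mul k a).symm

theorem card_mul_card_fiber {G H : Type*} [AddGroup G] [Fintype G] [AddGroup H] [Fintype H]
    [DecidableEq H] {ρ : G →+ H} (hρ : Function.Surjective ρ) (r : H) :
    Fintype.card H * ({a | ρ a = r} : Finset G).card = Fintype.card G := by
  have card_fiber (s : H) :
      ({a | ρ a = s} : Finset G).card = ({a | ρ a = r} : Finset G).card :=
    AddMonoidHom.card_fiber_eq_of_mem_range ρ (hρ s) (hρ r)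
  rw [← Finset.card_univ (α := G), Finset.card_eq_sum_card_fiberwise (s := Finset.univ) (f := ρ)
    (t := Finset.univ) fun _ _ => Finset.mem_univ _]
  simp [card_fiber]

variable {M : ℕ} [NeZero M]

/-- The Fejér kernel on `ZMod M`, up to normalisation: its mass is equidistributed among the
residue classes modulo every small divisor of `M`, while it is large at all small integers. -/
noncomputable def fejerWeight (l : ℕ) (a : ZMod M) : ℝ :=
  ‖∑ j ∈ Finset.range l, ZMod.stdAddChar ((j : ZMod M) * a)‖ ^ 2

theorem fejerWeight_nonneg (l : ℕ) (a : ZMod M) : 0 ≤ fejerWeight l a := sq_nonneg _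

theorem ofReal_fejerWeight (l : ℕ) (a : ZMod M) :
    (fejerWeight l a : ℂ) = ∑ j ∈ Finset.range l, ∑ k ∈ Finset.range l,
      ZMod.stdAddChar.mulShift (j - k : ZMod M) a := by
  rw [fejerWeight, Complex.ofReal_pow, ← Complex.mul_conj', map_sum, Finset.sum_mul_sum]
  refine Finset.sum_congr rfl fun j _ => Finset.sum_congr rfl fun k _ => ?_
  rw [← AddChar.map_neg_eq_conj, ← AddChar.map_add_eq_mul, AddChar.mulShift_apply, sub_mul,
    sub_eq_add_neg]

theorem mulShift_stdAddChar_natCast_ne_one {j k l m : ℕ} (hj : j < l) (hk : k < l) (hjk : j ≠ k)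
    (hm : 0 < m) (hl : l * m ≤ M) :
    ZMod.stdAddChar.mulShift (j - k : ZMod M) (m : ZMod M) ≠ 1 := by
  rw [AddChar.mulShift_apply, ← AddChar.map_zero_eq_one (ZMod.stdAddChar (N := M)),
    ZMod.injective_stdAddChar.ne_iff]
  intro h
  have dvd : (M : ℤ) ∣ ((j : ℤ) - k) * m := by
    rw [← ZMod.intCast_zmod_eq_zero_iff_dvd]
    exact_mod_cast h
  have ne_zero : ((j : ℤ) - k) * m ≠ 0 := mul_ne_zero (by lia) (by lia)
  have lt : |((j : ℤ) - k) * m| < M := by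
    have : |(j : ℤ) - k| < l := abs_sub_lt_iff.2 ⟨by lia, by lia⟩
    calc |((j : ℤ) - k) * m| = |(j : ℤ) - k| * m := by rw [abs_mul, Nat.abs_cast]
      _ < l * m := by gcongr
      _ ≤ M := by exact_mod_cast hl
  exact ne_zero (Int.eq_zero_of_abs_lt_dvd dvd lt)

theorem sum_fejerWeight_fiber {H : Type*} [AddCommGroup H] [Fintype H] [DecidableEq H]
    {ρ : ZMod M →+ H} (hρ : Function.Surjective ρ) {l : ℕ} (hl : l * Fintype.card H ≤ M) (r : H) :
    ∑ a with ρ a = r, fejerWeight l a = l * M / Fintype.card H := by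
  have map_card : ρ (Fintype.card H : ZMod M) = 0 := by
    rw [← nsmul_one, map_nsmul, card_nsmul_eq_zero]
  have orthogonality {j k : ℕ} (hj : j ∈ Finset.range l) (hk : k ∈ Finset.range l) :
      ∑ a with ρ a = r, ZMod.stdAddChar.mulShift (j - k : ZMod M) a
        = if j = k then (({a | ρ a = r} : Finset (ZMod M)).card : ℂ) else 0 := by
    split_ifs with hjk
    · simp [hjk]
    · exact sum_addChar_fiber_eq_zero ρ map_card (mulShift_stdAddChar_natCast_ne_one
        (Finset.mem_range.1 hj) (Finset.mem_range.1 hk) hjk Fintype.card_pos hl) r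
  have sum_eq : ∑ a with ρ a = r, fejerWeight l a
      = l * ({a | ρ a = r} : Finset (ZMod M)).card := by
    rw [← Complex.ofReal_inj, Complex.ofReal_sum]
    simp only [ofReal_fejerWeight]
    rw [Finset.sum_comm, Finset.sum_congr rfl fun j _ => Finset.sum_comm,
      Finset.sum_congr rfl fun j hj => Finset.sum_congr rfl fun k hk => orthogonality hj hk,
      Finset.sum_congr rfl fun j hj => (Finset.sum_ite_eq ..).trans (if_pos hj), Finset.sum_const,
      Finset.card_range, nsmul_eq_mul]
    simp
  have card_fiber : (Fintype.card H : ℝ) * ({a | ρ a = r} : Finset (ZMod M)).card = M := by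
    exact_mod_cast (card_mul_card_fiber hρ r).trans (ZMod.card M)
  rw [sum_eq, eq_div_iff (by simp), ← card_fiber]
  ring

theorem sq_div_four_le_fejerWeight_intCast {l : ℕ} {a : ℤ} (ha : 6 * |a| * l ≤ M) :
    (l : ℝ) ^ 2 / 4 ≤ fejerWeight l (a : ZMod M) := by
  have hM : (0 : ℝ) < M := by exact_mod_cast NeZero.pos M
  have half_le_re {j : ℕ} (hj : j ∈ Finset.range l) :
      1 / 2 ≤ (ZMod.stdAddChar (j * a : ZMod M)).re := by
    have angle_le : |2 * Real.pi * (j * a) / M| ≤ Real.pi / 3 := by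
      have : 6 * ((j : ℝ) * |(a : ℝ)|) ≤ M := by
        have : 6 * (j * |a|) ≤ (M : ℤ) := by nlinarith [Finset.mem_range.1 hj, abs_nonneg a]
        exact_mod_cast this
      rw [abs_div, abs_mul, abs_mul (j : ℝ), Nat.abs_cast, Nat.abs_cast,
        abs_of_pos Real.two_pi_pos, div_le_div_iff₀ hM three_pos]
      nlinarith [Real.pi_pos]
    calc (1 / 2 : ℝ) = Real.cos (Real.pi / 3) := Real.cos_pi_div_three.symm
      _ ≤ Real.cos |2 * Real.pi * (j * a) / M| :=
        Real.cos_le_cos_of_nonneg_of_le_pi (abs_nonneg _) (by linarith [Real.pi_pos]) angle_le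
      _ = (ZMod.stdAddChar (j * a : ZMod M)).re := by
        rw [Real.cos_abs, ← Complex.exp_ofReal_mul_I_re,
          show (j * a : ZMod M) = ((j * a : ℤ) : ZMod M) by push_cast; rfl, ZMod.stdAddChar_coe]
        congr 2
        push_cast
        ring
  calc (l : ℝ) ^ 2 / 4
    _ = (∑ _j ∈ Finset.range l, 1 / 2 : ℝ) ^ 2 := by
      rw [Finset.sum_const, Finset.card_range, nsmul_eq_mul]; ring
    _ ≤ (∑ j ∈ Finset.range l, (ZMod.stdAddChar (j * a : ZMod M)).re) ^ 2 := by
      gcongr with j hj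
      exact half_le_re hj
    _ ≤ fejerWeight l (a : ZMod M) := by
      rw [fejerWeight, ← Complex.re_sum, sq_le_sq, abs_norm]
      exact Complex.abs_re_le_norm _

end FejerWeight

section LargeSieve

theorem sum_prod_eq_ncard_mul_pow {G H R ι : Type*} [Fintype G] [Finite H] [DecidableEq H]
    [CommRing R] [Fintype ι] [DecidableEq ι] {ρ : G → H} {w : G → R} {c : R}
    (h : ∀ r, ∑ a with ρ a = r, w a = c) (S : Set (ι → H)) [DecidablePred (· ∈ S)] :
    ∑ a : ι → G with ρ ∘ a ∈ S, ∏ i, w (a i) = S.ncard * c ^ Fintype.card ι := by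
  have fiber (r : ι → H) : ∑ a : ι → G with ρ ∘ a = r, ∏ i, w (a i) = c ^ Fintype.card ι := by
    have filter_eq : ({a | ρ ∘ a = r} : Finset (ι → G))
        = Fintype.piFinset fun i => {a | ρ a = r i} := by
      ext a; simp [funext_iff]
    rw [filter_eq, ← Finset.prod_univ_sum, Finset.prod_congr rfl fun i _ => h (r i),
      Finset.prod_const, Finset.card_univ]
  have := Fintype.ofFinite S
  rw [← Finset.sum_fiberwise_of_maps_to (t := S.toFinset) (g := fun a => ρ ∘ a) (by simp)]
  rw [Finset.sum_congr rfl (g := fun _ => c ^ Fintype.card ι), Finset.sum_const, nsmul_eq_mul,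
    Set.ncard_eq_toFinset_card']
  intro r hr
  rw [Finset.filter_filter, ← fiber r]
  refine Finset.sum_congr (Finset.filter_congr fun a _ => ?_) fun _ _ => rfl
  exact and_iff_right_of_imp fun har => har ▸ Set.mem_toFinset.1 hr

theorem sum_mul_card_filter_mem {α κ : Type*} [DecidableEq α] (s : Finset α) (P : Finset κ)
    (E : κ → Finset α) (V : α → ℝ) :
    ∑ a ∈ s, V a * ({p ∈ P | a ∈ E p}.card : ℝ) = ∑ p ∈ P, ∑ a ∈ s ∩ E p, V a := by
  simp only [Finset.card_filter, Nat.cast_sum, Nat.cast_ite, Nat.cast_one, Nat.cast_zero,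
    Finset.mul_sum, mul_ite, mul_one, mul_zero]
  rw [Finset.sum_comm]
  simp only [Finset.sum_ite_mem]

theorem sum_mul_sq_card_filter_mem {α κ : Type*} [DecidableEq α] (s : Finset α) (P : Finset κ)
    (E : κ → Finset α) (V : α → ℝ) :
    ∑ a ∈ s, V a * ({p ∈ P | a ∈ E p}.card : ℝ) ^ 2
      = ∑ p ∈ P, ∑ q ∈ P, ∑ a ∈ s ∩ E p ∩ E q, V a := by
  simp only [sq, ← mul_assoc, sum_mul_card_filter_mem]

section Variance

variable {α κ : Type*} [Fintype α] [DecidableEq α] {P : Finset κ} {E : κ → Finset α} {W : α → ℝ}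
  {ω : κ → ℝ}

theorem sum_mul_sq_card_filter_mem_sub_le_of_pairwise_uncorrelated (hW : ∀ a, 0 ≤ W a)
    (h_one : ∀ p ∈ P, ∑ a ∈ E p, W a = ω p * ∑ a, W a)
    (h_two : ∀ p ∈ P, ∀ q ∈ P, p ≠ q → ∑ a ∈ E p ∩ E q, W a = ω p * ω q * ∑ a, W a) :
    ∑ a, W a * ({p ∈ P | a ∈ E p}.card - ∑ p ∈ P, ω p) ^ 2 ≤ (∑ p ∈ P, ω p) * ∑ a, W a := by
  classical
  set T := ∑ a, W a
  set D := ∑ p ∈ P, ω p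
  let N (a : α) : ℝ := {p ∈ P | a ∈ E p}.card
  have T_nonneg : 0 ≤ T := Finset.sum_nonneg fun a _ => hW a
  have first_moment : ∑ a, W a * N a = D * T := by
    simp only [N, sum_mul_card_filter_mem, Finset.univ_inter]
    rw [Finset.sum_congr rfl h_one, ← Finset.sum_mul]
  have second_moment : ∑ a, W a * N a ^ 2 ≤ (D ^ 2 + D) * T := by
    simp only [N, sum_mul_sq_card_filter_mem, Finset.univ_inter]
    calc _ ≤ ∑ p ∈ P, ∑ q ∈ P, (ω p * ω q + if p = q then ω p else 0) * T := by
          refine Finset.sum_le_sum fun p hp => Finset.sum_le_sum fun q hq => ?_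
          split_ifs with hpq
          · rw [← hpq, Finset.inter_self, h_one p hp]
            nlinarith [mul_nonneg (mul_self_nonneg (ω p)) T_nonneg]
          · rw [h_two p hp q hq hpq, add_zero]
      _ = (D ^ 2 + D) * T := by
          simp [← Finset.sum_mul, Finset.sum_add_distrib, sq, D, Finset.sum_mul_sum]
  calc ∑ a, W a * (N a - D) ^ 2
    _ = ∑ a, W a * N a ^ 2 - 2 * D * ∑ a, W a * N a + D ^ 2 * T := by
      simp only [T, Finset.mul_sum, ← Finset.sum_sub_distrib, ← Finset.sum_add_distrib]
      exact Finset.sum_congr rfl fun a _ => by ring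
    _ ≤ D * T := by rw [first_moment]; linarith

theorem sum_mul_sum_density_le_of_pairwise_uncorrelated (hW : ∀ a, 0 ≤ W a)
    (h_one : ∀ p ∈ P, ∑ a ∈ E p, W a = ω p * ∑ a, W a)
    (h_two : ∀ p ∈ P, ∀ q ∈ P, p ≠ q → ∑ a ∈ E p ∩ E q, W a = ω p * ω q * ∑ a, W a)
    {A : Finset α} (hA : ∀ a ∈ A, ∀ p ∈ P, a ∉ E p) :
    (∑ a ∈ A, W a) * ∑ p ∈ P, ω p ≤ ∑ a, W a := by
  set D := ∑ p ∈ P, ω p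
  have variance_le : (∑ a ∈ A, W a) * D ^ 2 ≤ D * ∑ a, W a :=
    calc (∑ a ∈ A, W a) * D ^ 2 = ∑ a ∈ A, W a * ({p ∈ P | a ∈ E p}.card - D) ^ 2 := by
          rw [Finset.sum_mul]
          refine Finset.sum_congr rfl fun a ha => ?_
          simp [Finset.filter_false_of_mem (hA a ha)]
      _ ≤ ∑ a, W a * ({p ∈ P | a ∈ E p}.card - D) ^ 2 :=
          Finset.sum_le_univ_sum_of_nonneg fun a => mul_nonneg (hW a) (sq_nonneg _)
      _ ≤ D * ∑ a, W a :=
          sum_mul_sq_card_filter_mem_sub_le_of_pairwise_uncorrelated hW h_one h_two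
  obtain hD | hD := le_or_gt D 0
  · exact (mul_nonpos_of_nonneg_of_nonpos (Finset.sum_nonneg fun a _ => hW a) hD).trans
      (Finset.sum_nonneg fun a _ => hW a)
  · refine le_of_mul_le_mul_left ?_ hD
    linarith

end Variance

theorem injOn_intCast_zmod (M : ℕ) :
    Set.InjOn (fun a : ℤ => (a : ZMod M)) {a | 2 * |a| < M} := by
  intro a ha b hb hab
  have dvd : (M : ℤ) ∣ a - b := by
    rw [← ZMod.intCast_zmod_eq_zero_iff_dvd, Int.cast_sub]
    exact sub_eq_zero.2 hab
  refine sub_eq_zero.1 (Int.eq_zero_of_abs_lt_dvd dvd ((abs_sub a b).trans_lt ?_))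
  rw [Set.mem_ofPred_eq] at ha hb
  linarith

variable {ι : Type*} [Fintype ι] {M : ℕ} [NeZero M] {l : ℕ}

theorem card_mul_pow_le_sum_prod_fejerWeight (hl : 0 < l) {A : Finset (ι → ℤ)}
    (hA : ∀ a ∈ A, ∀ i, 6 * |a i| * l ≤ M) :
    A.card * ((l : ℝ) ^ 2 / 4) ^ Fintype.card ι
      ≤ ∑ a ∈ A.image fun a i => (a i : ZMod M), ∏ i, fejerWeight l (a i) := by
  have two_mul_abs_lt {a : ι → ℤ} (ha : a ∈ A) (i : ι) : 2 * |a i| < M := by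
    have := NeZero.pos M
    nlinarith [hA a ha i, abs_nonneg (a i)]
  have reduce_injOn : Set.InjOn (fun (a : ι → ℤ) i => (a i : ZMod M)) A := fun a ha b hb hab =>
    funext fun i => injOn_intCast_zmod M (two_mul_abs_lt ha i) (two_mul_abs_lt hb i)
      (congrFun hab i)
  rw [Finset.sum_image reduce_injOn, ← nsmul_eq_mul]
  refine Finset.card_nsmul_le_sum _ _ _ fun a ha => ?_
  rw [← Finset.card_univ, ← Finset.prod_const]
  exact Finset.prod_le_prod (fun _ _ => by positivity) fun i _ =>
    sq_div_four_le_fejerWeight_intCast (hA a ha i)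

section Equidistribution

variable [DecidableEq ι]

theorem sum_prod_fejerWeight {H : Type*} [AddCommGroup H] [Fintype H] {ρ : ZMod M →+ H}
    (hρ : Function.Surjective ρ) (hl : l * Fintype.card H ≤ M) (S : Set (ι → H))
    [DecidablePred (· ∈ S)] :
    ∑ a : ι → ZMod M with ρ ∘ a ∈ S, ∏ i, fejerWeight l (a i)
      = S.ncard / (Fintype.card H : ℝ) ^ Fintype.card ι * (l * M) ^ Fintype.card ι := by
  classical
  rw [sum_prod_eq_ncard_mul_pow (sum_fejerWeight_fiber hρ hl), div_pow]
  ring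

theorem sum_prod_fejerWeight_univ (hl : l ≤ M) :
    ∑ a : ι → ZMod M, ∏ i, fejerWeight l (a i) = (l * M : ℝ) ^ Fintype.card ι := by
  simpa using sum_prod_fejerWeight (ι := ι) (ρ := (0 : ZMod M →+ Unit))
    (fun _ => ⟨0, rfl⟩) (by simpa using hl) Set.univ

theorem sum_prod_fejerWeight_cast_mem {p : ℕ} [NeZero p] (hp : p ∣ M) (hl : l * p ≤ M)
    (S : Set (ι → ZMod p)) [DecidablePred (· ∈ S)] :
    ∑ a : ι → ZMod M with (fun i => ((a i).cast : ZMod p)) ∈ S, ∏ i, fejerWeight l (a i)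
      = S.ncard / (p : ℝ) ^ Fintype.card ι * (l * M) ^ Fintype.card ι := by
  refine (sum_prod_fejerWeight (ρ := (ZMod.castHom hp (ZMod p) : ZMod M →+ ZMod p))
    (ZMod.castHom_surjective hp) (by simpa using hl) S).trans ?_
  rw [ZMod.card]

theorem sum_prod_fejerWeight_cast_mem_and_cast_mem {p q : ℕ} [NeZero p] [NeZero q]
    (hpq : p.Coprime q) (hp : p ∣ M) (hq : q ∣ M) (hl : l * (p * q) ≤ M) (S : Set (ι → ZMod p))
    (T : Set (ι → ZMod q)) [DecidablePred (· ∈ S)] [DecidablePred (· ∈ T)] :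
    ∑ a : ι → ZMod M with
        (fun i => ((a i).cast : ZMod p)) ∈ S ∧ (fun i => ((a i).cast : ZMod q)) ∈ T,
        ∏ i, fejerWeight l (a i)
      = S.ncard / (p : ℝ) ^ Fintype.card ι * (T.ncard / (q : ℝ) ^ Fintype.card ι)
        * (l * M) ^ Fintype.card ι := by
  let ρ : ZMod M →+* ZMod p × ZMod q := (ZMod.castHom hp _).prod (ZMod.castHom hq _)
  have ρ_surjective : Function.Surjective ρ := by
    rw [show ρ = (ZMod.chineseRemainder hpq).toRingHom.comp
      (ZMod.castHom (hpq.mul_dvd_of_dvd_of_dvd hp hq) (ZMod (p * q))) from Subsingleton.elim _ _]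
    exact (ZMod.chineseRemainder hpq).surjective.comp (ZMod.castHom_surjective _)
  let f : (ι → ZMod p × ZMod q) ≃ (ι → ZMod p) × (ι → ZMod q) := Equiv.arrowProdEquivProdArrow ..
  have ncard_preimage : (f ⁻¹' S ×ˢ T).ncard = S.ncard * T.ncard := by
    rw [← Equiv.image_symm_eq_preimage, Set.ncard_image_of_injective _ f.symm.injective,
      Set.ncard_prod]
  let : DecidablePred (· ∈ f ⁻¹' S ×ˢ T) := fun x =>
    inferInstanceAs (Decidable ((f x).1 ∈ S ∧ (f x).2 ∈ T))
  refine (sum_prod_fejerWeight (ρ := (ρ : ZMod M →+ ZMod p × ZMod q)) ρ_surjective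
    (by simpa using hl) (f ⁻¹' S ×ˢ T)).trans ?_
  rw [ncard_preimage, Fintype.card_prod, ZMod.card, ZMod.card]
  push_cast
  rw [mul_pow, mul_div_mul_comm]

end Equidistribution

theorem sum_prod_fejerWeight_mul_sum_ncard_div_le {P : Finset ℕ} (hP : ∀ p ∈ P, p ∣ M)
    (hcop : (P : Set ℕ).Pairwise Nat.Coprime) (hl₁ : l ≤ M)
    (hl₂ : ∀ p ∈ P, ∀ q ∈ P, l * (p * q) ≤ M) {Ω : ∀ p : ℕ, Set (ι → ZMod p)}
    {A : Finset (ι → ZMod M)}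
    (hA : ∀ a ∈ A, ∀ p ∈ P, (fun i => ((a i).cast : ZMod p)) ∉ Ω p) :
    (∑ a ∈ A, ∏ i, fejerWeight l (a i)) * ∑ p ∈ P, (Ω p).ncard / (p : ℝ) ^ Fintype.card ι
      ≤ (l * M : ℝ) ^ Fintype.card ι := by
  classical
  have neZero {p : ℕ} (hp : p ∈ P) : NeZero p := ⟨ne_zero_of_dvd_ne_zero (NeZero.ne M) (hP p hp)⟩
  rw [← sum_prod_fejerWeight_univ hl₁]
  refine sum_mul_sum_density_le_of_pairwise_uncorrelated
    (E := fun p => {a | (fun i => ((a i).cast : ZMod p)) ∈ Ω p})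
    (fun a => Finset.prod_nonneg fun i _ => fejerWeight_nonneg l (a i)) (fun p hp => ?_)
    (fun p hp q hq hpq => ?_) (by simpa using hA)
  · have := neZero hp
    rw [sum_prod_fejerWeight_univ hl₁]
    refine sum_prod_fejerWeight_cast_mem (hP p hp) ?_ (Ω p)
    exact (Nat.mul_le_mul_left l (Nat.le_mul_self p)).trans (hl₂ p hp p hp)
  · have := neZero hp
    have := neZero hq
    rw [sum_prod_fejerWeight_univ hl₁, ← Finset.filter_and]
    exact sum_prod_fejerWeight_cast_mem_and_cast_mem (hcop hp hq hpq) (hP p hp) (hP q hq)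
      (hl₂ p hp q hq) (Ω p) (Ω q)

theorem card_mul_sum_ncard_div_le {P : Finset ℕ} {Q : ℕ} (hP : ∀ p ∈ P, 0 < p ∧ p ≤ Q)
    (hcop : (P : Set ℕ).Pairwise Nat.Coprime) {Ω : ∀ p : ℕ, Set (ι → ZMod p)}
    {A : Finset (ι → ℤ)} (hA : ∀ a ∈ A, ∀ i, 6 * |a i| ≤ (Q ^ 2 : ℕ))
    (hΩ : ∀ a ∈ A, ∀ p ∈ P, (fun i => (a i : ZMod p)) ∉ Ω p) :
    A.card * ∑ p ∈ P, (Ω p).ncard / (p : ℝ) ^ Fintype.card ι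
      ≤ (4 * (Q : ℝ) ^ 2) ^ Fintype.card ι := by
  classical
  obtain rfl | ⟨p₀, hp₀⟩ := P.eq_empty_or_nonempty
  · simp
  have hQ : 0 < Q := (hP p₀ hp₀).1.trans_le (hP p₀ hp₀).2
  let l := ∏ p ∈ P, p
  -- `M / l = Q ^ 2` bounds all `p * q`, as exact equidistribution modulo `p * q` requires, and is
  -- small enough for the weights to be of size `l ^ 2` on all of `A`.
  let M := l * Q ^ 2
  have hl : 0 < l := Finset.prod_pos fun p hp => (hP p hp).1
  have : NeZero M := ⟨by positivity⟩
  have dvd_M (p : ℕ) (hp : p ∈ P) : p ∣ M := (Finset.dvd_prod_of_mem _ hp).mul_right _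
  have le_sum := card_mul_pow_le_sum_prod_fejerWeight (M := M) hl fun a ha i => by
    rw [mul_comm, Nat.cast_mul]
    exact mul_le_mul_of_nonneg_left (hA a ha i) (Nat.cast_nonneg l)
  have sieve := sum_prod_fejerWeight_mul_sum_ncard_div_le dvd_M hcop
    (Nat.le_mul_of_pos_right l (by positivity)) (fun p hp q hq => Nat.mul_le_mul_left l
      ((Nat.mul_le_mul (hP p hp).2 (hP q hq).2).trans_eq (sq Q).symm)) (Ω := Ω)
    (A := A.image fun a i => (a i : ZMod M)) (by
      simp only [Finset.forall_mem_image]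
      intro a ha p hp
      simpa [ZMod.cast_intCast (dvd_M p hp)] using hΩ a ha p hp)
  refine le_of_mul_le_mul_left ?_ (by positivity : 0 < ((l : ℝ) ^ 2 / 4) ^ Fintype.card ι)
  calc ((l : ℝ) ^ 2 / 4) ^ Fintype.card ι *
      (A.card * ∑ p ∈ P, (Ω p).ncard / (p : ℝ) ^ Fintype.card ι)
    _ = A.card * ((l : ℝ) ^ 2 / 4) ^ Fintype.card ι
        * ∑ p ∈ P, (Ω p).ncard / (p : ℝ) ^ Fintype.card ι := by ring
    _ ≤ _ := mul_le_mul_of_nonneg_right le_sum (by positivity)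
    _ ≤ (l * M : ℝ) ^ Fintype.card ι := sieve
    _ = ((l : ℝ) ^ 2 / 4) ^ Fintype.card ι * (4 * (Q : ℝ) ^ 2) ^ Fintype.card ι := by
      rw [← mul_pow, Nat.cast_mul, Nat.cast_pow]
      ring

end LargeSieve

theorem eventually_le_two_mul_log_mul_card_primes (m : ℕ) : ∀ᶠ Q : ℕ in Filter.atTop,
    (Q : ℝ) ≤ 2 * Real.log Q * ({p ∈ Q.primesLE | m ≤ p}.card : ℝ) := by
  have log_le := (Real.isLittleO_log_id_atTop.bound
    (show (0 : ℝ) < 1 / (6 * (m + 2)) by positivity)).natCast_atTop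
  filter_upwards [log_le, Filter.eventually_ge_atTop 2] with Q hlog hQ
  have two_le_Q : (2 : ℝ) ≤ Q := by exact_mod_cast hQ
  have log_pos : 0 < Real.log Q := Real.log_pos (by linarith)
  have mul_log_le : (m + 2) * Real.log Q ≤ Q / 6 := by
    rw [Real.norm_of_nonneg log_pos.le, id, Real.norm_of_nonneg (Nat.cast_nonneg Q)] at hlog
    calc (m + 2) * Real.log Q ≤ (m + 2) * (1 / (6 * (m + 2)) * Q) := by gcongr
      _ = Q / 6 := by field_simp
  have log_succ_le : Real.log (Q + 1) ≤ 2 * Real.log Q := by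
    rw [← Real.log_rpow (by positivity)]
    exact Real.log_le_log (by positivity) (by norm_num; nlinarith)
  have pi_le : (Nat.primeCounting Q : ℝ) ≤ ({p ∈ Q.primesLE | m ≤ p}.card : ℝ) + m := by
    rw [← Nat.primesLE_card_eq_primeCounting, ← Finset.card_filter_add_card_filter_not (m ≤ ·)]
    push_cast
    gcongr
    rw [← Finset.card_range m]
    refine Finset.card_le_card fun p hp => ?_
    simpa using (Finset.mem_filter.1 hp).2
  have pi_ge := Chebyshev.pi_ge Q
  rw [div_le_iff₀ log_pos] at pi_ge
  have log_two := Real.log_two_gt_d9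
  nlinarith [mul_le_mul_of_nonneg_right pi_le log_pos.le]

section MissingCycleType

variable {n : ℕ}

theorem pow_le_mul_ncard_forall_galPermutesRootsAs {p : ℕ} [Fact p.Prime] (hp : 2 * n ^ 2 ≤ p)
    (π : Equiv.Perm (Fin n)) :
    p ^ n ≤ 2 * n ^ n * {b : Fin n → ZMod p | ∀ a : Fin n → ℤ, (fun i => (a i : ZMod p)) = b →
      GalPermutesRootsAs (monicOfCoeffs fun i => (a i : ℚ)) π}.ncard := by
  have frobenius_le := card_pow_le_ncard_permutesRootsAs_frobenius (F := ZMod p) π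
    (by rwa [ZMod.card])
  rw [ZMod.card] at frobenius_le
  refine frobenius_le.trans (Nat.mul_le_mul_left _ (Set.ncard_le_ncard ?_ (Set.toFinite _)))
  rintro _ hb a rfl
  have : CharP (AlgebraicClosure (ZMod p)) p := charP_of_injective_algebraMap' (ZMod p) p
  have cast_eq : algebraMap (ZMod p) (AlgebraicClosure (ZMod p)) ∘ (fun i => (a i : ZMod p))
      = Int.castRingHom _ ∘ a := by
    ext i
    simp
  rw [Set.mem_ofPred_eq, map_monicOfCoeffs, cast_eq, ← map_monicOfCoeffs] at hb
  have lift := hb.galPermutesRootsAs_int (p := p) (monic_monicOfCoeffs a)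
    (by simp [natDegree_monicOfCoeffs])
  rwa [map_monicOfCoeffs] at lift

theorem card_mul_card_primes_le {Q : ℕ} {π : Equiv.Perm (Fin n)} {A : Finset (Fin n → ℤ)}
    (hA : ∀ a ∈ A, ∀ i, 6 * |a i| ≤ (Q ^ 2 : ℕ))
    (hπ : ∀ a ∈ A, ¬ GalPermutesRootsAs (monicOfCoeffs fun i => (a i : ℚ)) π) :
    A.card * ({p ∈ Q.primesLE | 2 * n ^ 2 ≤ p}.card : ℝ) ≤ 2 * n ^ n * (4 * (Q : ℝ) ^ 2) ^ n := by
  let Ω (p : ℕ) : Set (Fin n → ZMod p) := {b | ∀ a : Fin n → ℤ, (fun i => (a i : ZMod p)) = b →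
      GalPermutesRootsAs (monicOfCoeffs fun i => (a i : ℚ)) π}
  set P := {p ∈ Q.primesLE | 2 * n ^ 2 ≤ p}
  have prime {p : ℕ} (hp : p ∈ P) : p.Prime :=
    Nat.prime_of_mem_primesLE (Finset.mem_filter.1 hp).1
  have sieve := card_mul_sum_ncard_div_le (P := P) (Q := Q) (Ω := Ω)
    (fun p hp => ⟨(prime hp).pos, Nat.le_of_mem_primesLE (Finset.mem_filter.1 hp).1⟩)
    (fun p hp q hq => (Nat.coprime_primes (prime hp) (prime hq)).2) hA
    fun a ha p _ h => hπ a ha (h a rfl)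
  rw [Fintype.card_fin] at sieve
  have one_le_density {p : ℕ} (hp : p ∈ P) :
      (1 : ℝ) ≤ 2 * n ^ n * ((Ω p).ncard / (p : ℝ) ^ n) := by
    have : Fact p.Prime := ⟨prime hp⟩
    rw [← mul_div_assoc, one_le_div₀ (pow_pos (by exact_mod_cast (prime hp).pos) n)]
    exact_mod_cast pow_le_mul_ncard_forall_galPermutesRootsAs (Finset.mem_filter.1 hp).2 π
  calc A.card * (P.card : ℝ)
    _ ≤ A.card * ∑ p ∈ P, 2 * n ^ n * ((Ω p).ncard / (p : ℝ) ^ n) := by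
      gcongr
      simpa using Finset.card_nsmul_le_sum P _ 1 fun p hp => one_le_density hp
    _ = 2 * n ^ n * (A.card * ∑ p ∈ P, (Ω p).ncard / (p : ℝ) ^ n) := by
      rw [← Finset.mul_sum]; ring
    _ ≤ _ := by gcongr

theorem exists_nat_mem_Icc_mul_sqrt (K : ℕ) {H : ℝ} (hH : 1 ≤ H) :
    ∃ Q : ℕ, K ≤ Q ∧ K * √H ≤ Q ∧ Q ≤ 2 * K * √H := by
  have one_le_sqrt : 1 ≤ √H := Real.one_le_sqrt.2 hH
  refine ⟨K * ⌈√H⌉₊, Nat.le_mul_of_pos_right K (Nat.ceil_pos.2 (by linarith)), ?_, ?_⟩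
  · rw [Nat.cast_mul]
    gcongr
    exact Nat.le_ceil _
  · rw [Nat.cast_mul, mul_right_comm, mul_comm]
    gcongr
    linarith [Nat.ceil_lt_add_one (zero_le_one.trans one_le_sqrt)]

theorem exists_card_le_of_forall_not_galPermutesRootsAs (n : ℕ) :
    ∃ C : ℝ, ∀ (H : ℝ) (π : Equiv.Perm (Fin n)) (A : Finset (Fin n → ℤ)), 1 ≤ H →
      (∀ a ∈ A, ∀ i, (|a i| : ℝ) ≤ H) →
      (∀ a ∈ A, ¬ GalPermutesRootsAs (monicOfCoeffs fun i => (a i : ℚ)) π) →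
      (A.card : ℝ) ≤ C * H ^ ((n : ℝ) - 1 / 2) * (1 + Real.log H) := by
  obtain ⟨K, hK⟩ := Filter.eventually_atTop.1 ((eventually_le_two_mul_log_mul_card_primes
    (2 * n ^ 2)).and (Filter.eventually_ge_atTop 3))
  have three_le : (3 : ℝ) ≤ K := by exact_mod_cast (hK K le_rfl).2
  refine ⟨8 * n ^ n * (16 * K ^ 2) ^ n * K, fun H π A hH hA hπ => ?_⟩
  obtain ⟨Q, K_le, mul_sqrt_le, le_mul_sqrt⟩ := exists_nat_mem_Icc_mul_sqrt K hH
  have one_le_sqrt : 1 ≤ √H := Real.one_le_sqrt.2 hH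
  have sqrt_le : √H ≤ Q := by nlinarith
  have log_nonneg : 0 ≤ Real.log H := Real.log_nonneg hH
  have log_le : Real.log Q ≤ 2 * K * (1 + Real.log H) := by
    calc Real.log Q ≤ Real.log (2 * K * √H) := by gcongr; linarith
      _ = Real.log (2 * K) + Real.log H / 2 := by
        rw [Real.log_mul (by positivity) (by positivity), Real.log_sqrt (by linarith)]
      _ ≤ 2 * K * (1 + Real.log H) := by
        nlinarith [Real.log_le_self (by positivity : 0 ≤ 2 * (K : ℝ))]
  have box (a) (ha : a ∈ A) (i) : 6 * |a i| ≤ (Q ^ 2 : ℕ) := by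
    have : 6 * |(a i : ℝ)| ≤ Q ^ 2 :=
      calc 6 * |(a i : ℝ)| ≤ 6 * √H ^ 2 := by
            rw [Real.sq_sqrt (by linarith)]; gcongr; exact hA a ha i
        _ ≤ (K * √H) ^ 2 := by rw [mul_pow]; gcongr; nlinarith
        _ ≤ Q ^ 2 := by gcongr
    exact_mod_cast this
  let N : ℝ := {p ∈ Q.primesLE | 2 * n ^ 2 ≤ p}.card
  have primes_le : (Q : ℝ) ≤ 2 * Real.log Q * N := (hK Q K_le).1
  rw [Real.rpow_sub (by linarith), ← Real.sqrt_eq_rpow, Real.rpow_natCast]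
  have : A.card * √H ≤ 8 * n ^ n * (16 * K ^ 2) ^ n * K * H ^ n * (1 + Real.log H) :=
    calc A.card * √H ≤ A.card * (2 * Real.log Q * N) := by
          gcongr
          exact sqrt_le.trans primes_le
      _ = 2 * Real.log Q * (A.card * N) := by ring
      _ ≤ 2 * Real.log Q * (2 * n ^ n * (4 * (Q : ℝ) ^ 2) ^ n) :=
        mul_le_mul_of_nonneg_left (card_mul_card_primes_le box hπ)
          (mul_nonneg zero_le_two (Real.log_natCast_nonneg Q))
      _ ≤ 2 * (2 * K * (1 + Real.log H)) * (2 * n ^ n * (4 * (2 * K * √H) ^ 2) ^ n) := by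
        gcongr
      _ = _ := by
        rw [mul_pow _ √H, Real.sq_sqrt (by linarith)]
        ring
  rwa [← mul_div_assoc, div_mul_eq_mul_div, le_div_iff₀ (by positivity)]

end MissingCycleType

theorem exists_forall_le_mul_rpow_add_of_forall_le_mul_one_add_log {f : ℝ → ℝ} {C s : ℝ}
    (hf₁ : 0 ≤ f 1) (hf : ∀ H, 1 ≤ H → f H ≤ C * H ^ s * (1 + Real.log H)) {ε : ℝ} (hε : 0 < ε) :
    ∃ C : ℝ, ∀ H, 1 ≤ H → f H ≤ C * H ^ (s + ε) := by
  have C_nonneg : 0 ≤ C := by simpa using hf₁.trans (hf 1 le_rfl)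
  refine ⟨C * (1 + 1 / ε), fun H hH => (hf H hH).trans ?_⟩
  have hH₀ : 0 < H := by linarith
  have log_le : 1 + Real.log H ≤ (1 + 1 / ε) * H ^ ε := by
    have := Real.log_le_rpow_div hH₀.le hε
    have := Real.one_le_rpow hH hε.le
    rw [add_mul, one_mul, one_div_mul_eq_div]
    gcongr
  calc C * H ^ s * (1 + Real.log H)
    _ ≤ C * H ^ s * ((1 + 1 / ε) * H ^ ε) := by gcongr
    _ = C * (1 + 1 / ε) * H ^ (s + ε) := by rw [Real.rpow_add hH₀]; ring

theorem finite_setOf_forall_abs_intCast_le (ι : Type*) [Finite ι] (H : ℝ) :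
    {a : ι → ℤ | ∀ i, (|a i| : ℝ) ≤ H}.Finite := by
  refine Set.Finite.pi' (t := fun _ => {k : ℤ | (|k| : ℝ) ≤ H}) fun _ =>
    (Set.finite_Icc (-⌊H⌋) ⌊H⌋).subset fun k hk => ?_
  rw [Set.mem_Icc, ← abs_le, Int.le_floor, Int.cast_abs]
  exact hk

theorem count_polynomials_not_symmetric_general (n : ℕ) :
    ∃ C : ℝ, ∀ H : ℝ, 1 ≤ H →
      (Set.ncard {a : Fin n → ℤ |
          (∀ i, (|a i| : ℝ) ≤ H) ∧
          ¬ Nonempty ((X ^ n + ∑ i : Fin n, Polynomial.C ((a i : ℚ)) * X ^ (n - 1 - (i : ℕ)) :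
              Polynomial ℚ).Gal ≃* Equiv.Perm (Fin n))} : ℝ)
        ≤ C * H ^ ((n : ℝ) - 1 / 2) * (1 + Real.log H) := by
  obtain ⟨C, hC⟩ := exists_card_le_of_forall_not_galPermutesRootsAs n
  refine ⟨n.factorial * C, fun H hH => ?_⟩
  let missing (π : Equiv.Perm (Fin n)) : Set (Fin n → ℤ) :=
    {a | (∀ i, (|a i| : ℝ) ≤ H) ∧ ¬ GalPermutesRootsAs (monicOfCoeffs fun i => (a i : ℚ)) π}
  have missing_finite (π) : (missing π).Finite :=
    (finite_setOf_forall_abs_intCast_le (Fin n) H).subset fun a ha => ha.1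
  have ncard_missing_le (π) :
      ((missing π).ncard : ℝ) ≤ C * H ^ ((n : ℝ) - 1 / 2) * (1 + Real.log H) := by
    rw [Set.ncard_eq_toFinset_card _ (missing_finite π)]
    exact hC H π _ hH (fun a ha => ((missing_finite π).mem_toFinset.1 ha).1)
      fun a ha => ((missing_finite π).mem_toFinset.1 ha).2
  calc _ ≤ ((⋃ π, missing π).ncard : ℝ) := by
        refine Nat.cast_le.2 (Set.ncard_le_ncard ?_ (Set.finite_iUnion missing_finite))
        rintro a ⟨ha, not_symmetric⟩
        by_contra h
        refine not_symmetric (nonempty_gal_mulEquiv_perm fun π => ?_)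
        by_contra hπ
        exact h (Set.mem_iUnion_of_mem π ⟨ha, hπ⟩)
    _ ≤ ∑ π, ((missing π).ncard : ℝ) := by exact_mod_cast Set.ncard_iUnion_le_of_fintype missing
    _ ≤ ∑ _π : Equiv.Perm (Fin n), C * H ^ ((n : ℝ) - 1 / 2) * (1 + Real.log H) :=
      Finset.sum_le_sum fun π _ => ncard_missing_le π
    _ = n.factorial * C * H ^ ((n : ℝ) - 1 / 2) * (1 + Real.log H) := by
      simp [Fintype.card_perm, mul_assoc]

/-- (Gallagher) For `n ≥ 2`, there are at most `O_{n,ε}(H^(n-1/2+ε))` monic integer polynomials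
of degree `n` and height at most `H` whose splitting field over `ℚ` has Galois group not
isomorphic to the full symmetric group `Sₙ`. -/
theorem count_polynomials_not_symmetric (n : ℕ) (hn : 2 ≤ n) (ε : ℝ) (hε : 0 < ε) :
    ∃ C : ℝ, ∀ H : ℝ, 1 ≤ H →
      (Set.ncard {a : Fin n → ℤ |
          (∀ i, (|a i| : ℝ) ≤ H) ∧
          ¬ Nonempty ((X ^ n + ∑ i : Fin n, Polynomial.C ((a i : ℚ)) * X ^ (n - 1 - (i : ℕ)) :
              Polynomial ℚ).Gal ≃* Equiv.Perm (Fin n))} : ℝ)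
        ≤ C * H ^ ((n : ℝ) - 1 / 2 + ε) := by
  obtain ⟨C, hC⟩ := count_polynomials_not_symmetric_general n
  exact exists_forall_le_mul_rpow_add_of_forall_le_mul_one_add_log (Nat.cast_nonneg _) hC hε
end
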